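/- arXiv:1004.4093 — 3 statements merged into one kernel-verified Lean document; each statement's English description precedes it below -/
import Mathlib

section
/- Define f, g : ℝ² → ℝ⁴ near 0 by f(x₁,x₂) = (x₁, x₁x₂, x₁x₂e^{x₂}, 0) and g(x₁,x₂) = (x₁, x₁x₂, x₁x₂e^{x₂}, g₄(x₁,x₂)), where g₄(x₁,x₂) = Σ_{k=1}^{∞} Σ_{i=0}^{∞} (k!/(k+i)!)·x₁^{k}·x₂^{k+i+1}. Then f and g are C^∞ L equivalent: there exist an open neighborhood U of 0 in ℝ⁴ and a C^∞ map π : U → ℝ⁴ with π(0)=0 and invertible derivative at 0, such that π(g(x)) = f(x) for all x in some neighborhood of 0 in ℝ². -/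
open scoped Nat Topology

noncomputable section

/-- `g₄(x₁,x₂) = Σ_{k=1}^∞ Σ_{i=0}^∞ (k!/(k+i)!)·x₁^k·x₂^{k+i+1}`, as a sum over
`p : ℕ × ℕ` with `k = p.1 + 1`, `i = p.2`. -/
def g4 (x : ℝ × ℝ) : ℝ :=
  ∑' p : ℕ × ℕ,
    (((p.1 + 1)! : ℝ) / ((p.1 + 1 + p.2)! : ℝ)) * x.1 ^ (p.1 + 1) * x.2 ^ (p.1 + 1 + p.2 + 1)

/-- `f(x₁,x₂) = (x₁, x₁x₂, x₁x₂e^{x₂}, 0)`. -/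
def fmap (x : ℝ × ℝ) : ℝ × ℝ × ℝ × ℝ :=
  (x.1, x.1 * x.2, x.1 * x.2 * Real.exp x.2, 0)

/-- `g(x₁,x₂) = (x₁, x₁x₂, x₁x₂e^{x₂}, g₄(x₁,x₂))`. -/
def gmap (x : ℝ × ℝ) : ℝ × ℝ × ℝ × ℝ :=
  (x.1, x.1 * x.2, x.1 * x.2 * Real.exp x.2, g4 x)

open MeasureTheory Set Filter

/-- The ray direction. -/
def om : ℂ := 1 + Complex.I

lemma om_re : om.re = 1 := by simp [om]
lemma om_im : om.im = 1 := by simp [om]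
lemma om_ne : om ≠ 0 := by
  intro h; have := congrArg Complex.re h; simp [om_re] at this

lemma norm_om_le : ‖om‖ ≤ 2 := by
  unfold om
  refine (norm_add_le _ _).trans ?_
  simp; norm_num

lemma norm_om_mul_le (r : ℝ) (hr : 0 ≤ r) : ‖om * (r : ℂ)‖ ≤ 2 * r := by
  rw [norm_mul, Complex.norm_real, Real.norm_of_nonneg hr]
  exact mul_le_mul_of_nonneg_right norm_om_le hr

lemma norm_den (x : ℝ) : 1 / 2 ≤ ‖1 - om * (x : ℂ)‖ := by
  have h : Complex.normSq (1 - om * (x : ℂ)) = (1 - x) ^ 2 + x ^ 2 := by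
    simp [Complex.normSq_apply, om_re, om_im]; ring
  have h2 : ‖1 - om * (x : ℂ)‖ ^ 2 = (1 - x) ^ 2 + x ^ 2 := by
    rw [← h, Complex.normSq_eq_norm_sq]
  have h0 := norm_nonneg (1 - om * (x : ℂ))
  nlinarith [sq_nonneg (1 - 2 * x), sq_nonneg (‖1 - om * (x : ℂ)‖ - 1 / 2)]

lemma den_ne (x : ℝ) : 1 - om * (x : ℂ) ≠ 0 := by
  intro h; have := norm_den x; rw [h] at this; norm_num at this

lemma norm_den_inv (x : ℝ) : ‖(1 - om * (x : ℂ))⁻¹‖ ≤ 2 := by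
  rw [norm_inv]
  calc _ ≤ (1 / 2 : ℝ)⁻¹ := inv_anti₀ (by norm_num) (norm_den x)
    _ = 2 := by norm_num

/-- kernel -/
def Ker (p q : ℕ) (y : ℝ × ℝ) (r : ℝ) : ℂ :=
  Complex.exp (-(om * r) + om * r * y.2) * (om * r) ^ p * ((1 - om * ((r * y.1 : ℝ) : ℂ))⁻¹) ^ q

lemma Ker_cont (p q : ℕ) (y : ℝ × ℝ) : Continuous (Ker p q y) := by
  unfold Ker
  have : Continuous fun r : ℝ => (1 - om * ((r * y.1 : ℝ) : ℂ))⁻¹ :=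
    Continuous.inv₀ (by fun_prop) (fun r => den_ne _)
  fun_prop

lemma Ker_bound (p q : ℕ) (y : ℝ × ℝ) (r : ℝ) (hr : 0 ≤ r) (hy : y.2 < 1 / 2) :
    ‖Ker p q y r‖ ≤ Real.exp (-(1 / 2) * r) * (2 * r) ^ p * 2 ^ q := by
  unfold Ker
  rw [norm_mul, norm_mul, norm_pow, norm_pow, Complex.norm_exp]
  gcongr
  · simp [om_re, om_im]; nlinarith
  · exact norm_om_mul_le r hr
  · exact norm_den_inv _

lemma int_pow_exp (p : ℕ) (b : ℝ) (hb : 0 < b) :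
    IntegrableOn (fun r : ℝ => r ^ p * Real.exp (-b * r)) (Ioi 0) := by
  have := integrableOn_rpow_mul_exp_neg_mul_rpow (p := 1) (s := p) (b := b)
    (by have : (0 : ℝ) ≤ p := by positivity
        linarith) (by norm_num) hb
  simpa using this

lemma bound_int (p q : ℕ) :
    IntegrableOn (fun r : ℝ => Real.exp (-(1 / 2) * r) * (2 * r) ^ p * 2 ^ q) (Ioi 0) := by
  have := (int_pow_exp p (1 / 2) (by norm_num)).const_mul (2 ^ p * 2 ^ q)
  refine this.congr (Eventually.of_forall fun r => ?_)
  simp only [mul_pow]; ring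

lemma Ker_int (p q : ℕ) (y : ℝ × ℝ) (hy : y.2 < 1 / 2) : IntegrableOn (Ker p q y) (Ioi 0) := by
  refine Integrable.mono' (bound_int p q) (Ker_cont p q y).aestronglyMeasurable ?_
  filter_upwards [ae_restrict_mem measurableSet_Ioi] with r hr
  exact Ker_bound p q y r (le_of_lt hr) hy

/-- the parametric integral -/
def J (p q : ℕ) (y : ℝ × ℝ) : ℂ := ∫ r in Ioi (0 : ℝ), Ker p q y r

/-- rank one operators -/
def L1 : ℂ →L[ℝ] (ℝ × ℝ →L[ℝ] ℂ) :=
  ContinuousLinearMap.smulRightL ℝ (ℝ × ℝ) ℂ (ContinuousLinearMap.fst ℝ ℝ ℝ)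
def L2 : ℂ →L[ℝ] (ℝ × ℝ →L[ℝ] ℂ) :=
  ContinuousLinearMap.smulRightL ℝ (ℝ × ℝ) ℂ (ContinuousLinearMap.snd ℝ ℝ ℝ)

lemma Ker_deriv (p q : ℕ) (y : ℝ × ℝ) (r : ℝ) :
    HasFDerivAt (fun y => Ker p q y r)
      (L1 ((q : ℂ) * Ker (p + 1) (q + 1) y r) + L2 (Ker (p + 1) q y r)) y := by
  have h1 : HasFDerivAt (fun y : ℝ × ℝ => ((r * y.1 : ℝ) : ℂ))
      (Complex.ofRealCLM.comp (r • ContinuousLinearMap.fst ℝ ℝ ℝ)) y :=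
    Complex.ofRealCLM.hasFDerivAt.comp y ((hasFDerivAt_fst (p := y)).const_mul r)
  have h2 : HasFDerivAt (fun y : ℝ × ℝ => (y.2 : ℂ))
      (Complex.ofRealCLM.comp (ContinuousLinearMap.snd ℝ ℝ ℝ)) y :=
    Complex.ofRealCLM.hasFDerivAt.comp y (hasFDerivAt_snd (p := y))
  have h3 := ((h2.const_mul (om * r)).const_add (-(om * r))).cexp
  have hd : HasDerivAt (fun z : ℂ => ((1 - om * z)⁻¹) ^ q)
      (q * ((1 - om * ((r * y.1 : ℝ) : ℂ))⁻¹) ^ (q + 1) * om) ((r * y.1 : ℝ) : ℂ) := by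
    have e1 : HasDerivAt (fun z : ℂ => 1 - om * z) (-om) ((r * y.1 : ℝ) : ℂ) := by
      simpa using ((hasDerivAt_id _).const_mul om).const_sub 1
    have := (e1.inv (den_ne _)).pow q
    refine this.congr_deriv ?_
    rcases q with _ | q
    · simp
    · have := den_ne (r * y.1)
      simp only [Nat.add_sub_cancel, Pi.inv_apply]
      rw [neg_neg, div_eq_mul_inv, ← inv_pow]
      ring
  have h4 := hd.comp_hasFDerivAt y h1
  have h5 := (h3.mul_const ((om * r) ^ p)).mul h4
  refine (h5.congr_of_eventuallyEq (Eventually.of_forall fun y => rfl)).congr_fderiv ?_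
  ext
  · simp [L1, L2, Ker]; ring
  · simp [L1, L2, Ker]; ring

lemma J_deriv (p q : ℕ) (y : ℝ × ℝ) (hy : y.2 < 1 / 2) :
    HasFDerivAt (J p q) (L1 ((q : ℂ) * J (p + 1) (q + 1) y) + L2 (J (p + 1) q y)) y := by
  have i1 := (Ker_int (p + 1) (q + 1) y hy).const_mul (q : ℂ)
  have i2 := Ker_int (p + 1) q y hy
  have key := hasFDerivAt_integral_of_dominated_of_fderiv_le (𝕜 := ℝ)
    (μ := volume.restrict (Ioi (0 : ℝ)))
    (F := fun y r => Ker p q y r)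
    (F' := fun y r => L1 ((q : ℂ) * Ker (p + 1) (q + 1) y r) + L2 (Ker (p + 1) q y r))
    (s := {y : ℝ × ℝ | y.2 < 1 / 2}) (x₀ := y)
    (bound := fun r => ‖L1‖ * (q * (Real.exp (-(1 / 2) * r) * (2 * r) ^ (p + 1) * 2 ^ (q + 1)))
      + ‖L2‖ * (Real.exp (-(1 / 2) * r) * (2 * r) ^ (p + 1) * 2 ^ q))
    ((isOpen_lt continuous_snd continuous_const).mem_nhds hy)
    (Eventually.of_forall fun y => (Ker_cont p q y).aestronglyMeasurable)
    (Ker_int p q y hy)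
    ((L1.integrable_comp i1).add (L2.integrable_comp i2)).aestronglyMeasurable
    ?_ ?_ ?_
  · have e : (∫ r in Ioi (0 : ℝ), (L1 ((q : ℂ) * Ker (p + 1) (q + 1) y r) + L2 (Ker (p + 1) q y r)))
        = L1 ((q : ℂ) * J (p + 1) (q + 1) y) + L2 (J (p + 1) q y) := by
      rw [integral_add (L1.integrable_comp i1) (L2.integrable_comp i2),
        L1.integral_comp_comm i1, L2.integral_comp_comm i2, integral_const_mul]
      rfl
    rw [e] at key
    exact key
  · filter_upwards [ae_restrict_mem measurableSet_Ioi] with r hr x hx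
    refine (norm_add_le _ _).trans (add_le_add ?_ ?_)
    · refine (L1.le_opNorm _).trans ?_
      gcongr
      rw [norm_mul, Complex.norm_natCast]
      gcongr
      exact Ker_bound _ _ _ _ (le_of_lt hr) hx
    · refine (L2.le_opNorm _).trans ?_
      gcongr
      exact Ker_bound _ _ _ _ (le_of_lt hr) hx
  · exact (((bound_int (p + 1) (q + 1)).const_mul (q : ℝ)).const_mul _).add
      ((bound_int (p + 1) q).const_mul _)
  · exact Eventually.of_forall fun r x _ => Ker_deriv p q x r

lemma J_contDiffOn (n : ℕ) : ∀ p q : ℕ, ContDiffOn ℝ n (J p q) {y : ℝ × ℝ | y.2 < 1 / 2} := by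
  have ho : IsOpen {y : ℝ × ℝ | y.2 < 1 / 2} := isOpen_lt continuous_snd continuous_const
  induction n with
  | zero =>
    intro p q
    simp only [Nat.cast_zero, contDiffOn_zero]
    exact fun y hy => (J_deriv p q y hy).continuousAt.continuousWithinAt
  | succ n ih =>
    intro p q
    push_cast
    rw [contDiffOn_succ_iff_hasFDerivWithinAt_of_uniqueDiffOn ho.uniqueDiffOn]
    refine ⟨by simp, fun y => L1 ((q : ℂ) * J (p + 1) (q + 1) y) + L2 (J (p + 1) q y), ?_,
      fun y hy => (J_deriv p q y hy).hasFDerivWithinAt⟩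
    exact (L1.contDiff.comp_contDiffOn (contDiffOn_const.mul (ih _ _))).add
      (L2.contDiff.comp_contDiffOn (ih _ _))

lemma J_contDiffAt (p q : ℕ) : ContDiffAt ℝ (⊤ : ℕ∞) (J p q) 0 := by
  have ho : IsOpen {y : ℝ × ℝ | y.2 < 1 / 2} := isOpen_lt continuous_snd continuous_const
  have : ContDiffOn ℝ (⊤ : ℕ∞) (J p q) {y : ℝ × ℝ | y.2 < 1 / 2} :=
    contDiffOn_infty.2 fun n => J_contDiffOn n p q
  exact this.contDiffAt (ho.mem_nhds (by simp))
lemma Ker_zero (p : ℕ) (r : ℝ) : Ker p 0 0 r = Complex.exp (-(om * r)) * (om * r) ^ p := by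
  simp [Ker]

lemma ker0_int (p : ℕ) :
    IntegrableOn (fun r : ℝ => Complex.exp (-(om * r)) * (om * r) ^ p) (Ioi 0) := by
  have := Ker_int p 0 0 (by simp)
  refine this.congr (Eventually.of_forall fun r => Ker_zero p r)

lemma ker0_norm_le (p : ℕ) (r : ℝ) (hr : 0 ≤ r) :
    ‖Complex.exp (-(om * r)) * (om * r) ^ p‖ ≤ 2 ^ p * (r ^ p * Real.exp (-1 * r)) := by
  rw [norm_mul, norm_pow, Complex.norm_exp]
  have h1 : (-(om * (r : ℂ))).re = -1 * r := by simp [om_re]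
  rw [h1]
  have := pow_le_pow_left₀ (norm_nonneg _) (norm_om_mul_le r hr) p
  rw [mul_pow] at this
  nlinarith [Real.exp_pos (-1 * r)]

lemma gamma_nat (p : ℕ) : ∫ r in Ioi (0 : ℝ), r ^ p * Real.exp (-1 * r) = (p ! : ℝ) := by
  have := Real.Gamma_eq_integral (s := p + 1) (by positivity)
  rw [Real.Gamma_nat_eq_factorial] at this
  rw [this]
  refine setIntegral_congr_fun measurableSet_Ioi fun r _ => ?_
  simp [mul_comm]

lemma ker0_norm_integral (p : ℕ) :
    ∫ r in Ioi (0 : ℝ), ‖Complex.exp (-(om * r)) * (om * r) ^ p‖ ≤ 2 ^ p * (p ! : ℝ) := by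
  rw [← gamma_nat, ← integral_const_mul]
  refine setIntegral_mono_on (ker0_int p).norm ((int_pow_exp p 1 one_pos).const_mul _)
    measurableSet_Ioi fun r hr => ker0_norm_le p r (le_of_lt hr)

lemma ker0_integral (p : ℕ) :
    om * ∫ r in Ioi (0 : ℝ), Complex.exp (-(om * r)) * (om * r) ^ p = (p ! : ℂ) := by
  induction p with
  | zero =>
    have := integral_exp_mul_complex_Ioi (a := -om) (by simp [om_re]) 0
    simp only [pow_zero, mul_one, ← neg_mul]
    rw [this]
    simp [om_ne]
  | succ p ih =>
    have hd : ∀ r ∈ Ici (0 : ℝ), HasDerivAt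
        (fun r : ℝ => Complex.exp (-(om * r)) * (om * r) ^ (p + 1))
        (om * ((p + 1) * (Complex.exp (-(om * r)) * (om * r) ^ p)
          - Complex.exp (-(om * r)) * (om * r) ^ (p + 1))) r := by
      intro r _
      have h0 : HasDerivAt (fun r : ℝ => om * (r : ℂ)) om r := by
        simpa using (Complex.ofRealCLM.hasDerivAt (x := r)).const_mul om
      refine (h0.neg.cexp.mul (h0.pow (p + 1))).congr_deriv ?_
      simp; ring
    have hi : IntegrableOn (fun r : ℝ => om * ((p + 1) * (Complex.exp (-(om * r)) * (om * r) ^ p)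
          - Complex.exp (-(om * r)) * (om * r) ^ (p + 1))) (Ioi 0) :=
      (((ker0_int p).const_mul _).sub (ker0_int (p + 1))).const_mul _
    have ht : Tendsto (fun r : ℝ => Complex.exp (-(om * r)) * (om * r) ^ (p + 1)) atTop (𝓝 0) := by
      have h1 := (Real.tendsto_pow_mul_exp_neg_atTop_nhds_zero (p + 1)).const_mul (2 ^ (p + 1))
      rw [mul_zero] at h1
      refine squeeze_zero_norm' ?_ h1
      filter_upwards [eventually_ge_atTop 0] with r hr
      simpa using ker0_norm_le (p + 1) r hr
    have := integral_Ioi_of_hasDerivAt_of_tendsto' hd hi ht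
    rw [integral_const_mul, integral_sub ((ker0_int p).const_mul _) (ker0_int (p + 1)),
      integral_const_mul, mul_sub] at this
    simp only [Complex.ofReal_zero, mul_zero, ne_eq, Nat.add_eq_zero_iff, one_ne_zero, and_false,
      not_false_eq_true, zero_pow, sub_zero] at this
    rw [Nat.factorial_succ]
    push_cast
    rw [← ih]
    linear_combination -this

lemma aux_summable (z : ℂ) (t : ℝ) :
    Summable fun p : ℕ × ℕ => z ^ p.1 * (t : ℂ) ^ (p.1 + 1 + p.2) / ((p.1 + 1 + p.2)! : ℂ) := by
  have h1 := Real.summable_pow_div_factorial (‖z‖ * |t|)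
  have h2 := (Real.summable_pow_div_factorial |t|).mul_left |t|
  refine Summable.of_norm_bounded (h1.mul_of_nonneg h2 (fun _ => by positivity)
    (fun _ => by positivity)) ?_
  rintro ⟨m, i⟩
  simp only [norm_div, norm_mul, norm_pow, Complex.norm_real, Complex.norm_natCast,
    Real.norm_eq_abs]
  have hf : ((m ! : ℝ) * (i ! : ℝ)) ≤ ((m + 1 + i)! : ℝ) := by
    have a1 : m ! * i ! ≤ (m + i)! := Nat.le_of_dvd (Nat.factorial_pos _)
      (Nat.factorial_mul_factorial_dvd_factorial_add m i)
    have a2 : (m + i)! ≤ (m + 1 + i)! := Nat.factorial_le (by omega)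
    exact_mod_cast a1.trans a2
  calc ‖z‖ ^ m * |t| ^ (m + 1 + i) / ((m + 1 + i)! : ℝ)
      ≤ ‖z‖ ^ m * |t| ^ (m + 1 + i) / ((m ! : ℝ) * (i ! : ℝ)) := by gcongr
    _ = _ := by
      rw [mul_pow]; field_simp; ring

lemma aux_tsum (z : ℂ) (hz : 1 - z ≠ 0) (t : ℝ) :
    ∑' p : ℕ × ℕ, z ^ p.1 * (t : ℂ) ^ (p.1 + 1 + p.2) / ((p.1 + 1 + p.2)! : ℂ)
      = (Complex.exp t - Complex.exp (z * t)) * (1 - z)⁻¹ := by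
  have hs := aux_summable z t
  rw [← Finset.HasAntidiagonal.sigmaAntidiagonalEquivProd.tsum_eq (_ : ℕ × ℕ → ℂ)]
  refine (((Finset.HasAntidiagonal.sigmaAntidiagonalEquivProd (A := ℕ)).summable_iff.2
    hs).tsum_sigma' (fun n => (hasSum_fintype _).summable)).trans ?_
  have hexp : ∀ w : ℂ, HasSum (fun n : ℕ => w ^ (n + 1) / ((n + 1)! : ℂ)) (Complex.exp w - 1) := by
    intro w
    have := NormedSpace.exp_series_hasSum_exp' (𝕂 := ℂ) w
    rw [← Complex.exp_eq_exp_ℂ] at this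
    have := (hasSum_nat_add_iff' 1).2 this
    simpa [div_eq_inv_mul] using this
  have h2 := (((hexp t).sub (hexp (z * t))).mul_right (1 - z)⁻¹)
  rw [show (Complex.exp t - Complex.exp (z * t)) = (Complex.exp t - 1 - (Complex.exp (z * t) - 1))
    by ring, ← h2.tsum_eq]
  refine tsum_congr fun n => ?_
  rw [tsum_fintype]
  have : ∀ x : Finset.HasAntidiagonal.antidiagonal n, (fun p : ℕ × ℕ => z ^ p.1 * (t : ℂ) ^ (p.1 + 1 + p.2) /
      ((p.1 + 1 + p.2)! : ℂ)) (x : ℕ × ℕ) = z ^ (x : ℕ × ℕ).1 * ((t : ℂ) ^ (n + 1) / ((n + 1)! : ℂ)) := by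
    rintro ⟨⟨a, b⟩, h⟩
    have h : a + b = n := by simpa using h
    have e : a + 1 + b = n + 1 := by omega
    simp only [e]; ring
  have h3 : ∑ x : Finset.HasAntidiagonal.antidiagonal n, (fun p : ℕ × ℕ => z ^ p.1 * (t : ℂ) ^ (p.1 + 1 + p.2) /
      ((p.1 + 1 + p.2)! : ℂ)) (x : ℕ × ℕ) =
      (∑ k ∈ Finset.range (n + 1), z ^ k) * ((t : ℂ) ^ (n + 1) / ((n + 1)! : ℂ)) := by
    rw [Finset.sum_congr rfl (fun x _ => this x), Finset.sum_coe_sort (Finset.HasAntidiagonal.antidiagonal n)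
      (fun x : ℕ × ℕ => z ^ x.1 * ((t : ℂ) ^ (n + 1) / ((n + 1)! : ℂ))), ← Finset.sum_mul,
      Finset.Nat.sum_antidiagonal_eq_sum_range_succ_mk]
  refine h3.trans ?_
  have hg := geom_sum_mul_neg z (n + 1)
  rw [mul_pow]
  have : (∑ k ∈ Finset.range (n + 1), z ^ k) = (1 - z ^ (n + 1)) * (1 - z)⁻¹ := by
    rw [← hg]; field_simp
  rw [this]; ring

lemma g4_hasSum (s t : ℝ) (hs : |s| < 1 / 2) (ht : |t| < 1 / 2) :
    HasSum (fun p : ℕ × ℕ => ((((p.1 + 1)! : ℝ) / ((p.1 + 1 + p.2)! : ℝ)) * s ^ (p.1 + 1)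
        * t ^ (p.1 + 1 + p.2 + 1) : ℝ))
      (om * (((s * t * Real.exp t : ℝ) : ℂ) * J 1 1 (s, 0) - ((s * t : ℝ) : ℂ) * J 1 1 (s, s * t))).re := by
  set c : ℕ × ℕ → ℂ := fun p => (s : ℂ) ^ p.1 * (t : ℂ) ^ (p.1 + 1 + p.2) / ((p.1 + 1 + p.2)! : ℂ)
    with hc
  set F : ℕ × ℕ → ℝ → ℂ := fun p r => c p * (Complex.exp (-(om * r)) * (om * r) ^ (p.1 + 1)) with hF
  have hst : s * t < 1 / 2 := by
    have := abs_mul s t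
    have h2 := le_abs_self (s * t)
    nlinarith [abs_nonneg s, abs_nonneg t]
  have hsum := hasSum_integral_of_summable_integral_norm (μ := volume.restrict (Ioi (0 : ℝ)))
    (F := F) (fun p => (ker0_int _).const_mul _) ?_
  · have h1 := hsum.mul_left (om * (s * t : ℂ))
    have h2 := Complex.hasSum_re h1
    have e1 : ∀ r : ℝ, ∑' p, F p r
        = Complex.exp t * Ker 1 1 (s, 0) r - Ker 1 1 (s, s * t) r := by
      intro r
      have h3 : ∀ p : ℕ × ℕ, F p r = (Complex.exp (-(om * r)) * (om * r)) *
          ((om * ((r * s : ℝ) : ℂ)) ^ p.1 * (t : ℂ) ^ (p.1 + 1 + p.2) / ((p.1 + 1 + p.2)! : ℂ)) := by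
        intro p
        simp only [hF, hc]
        push_cast
        rw [mul_pow, mul_pow, mul_pow]
        ring
      rw [tsum_congr h3, tsum_mul_left, aux_tsum _ (den_ne _)]
      have h4 : Complex.exp (-(om * r) + om * r * ((s * t : ℝ) : ℂ))
          = Complex.exp (-(om * r)) * Complex.exp (om * ((r * s : ℝ) : ℂ) * t) := by
        rw [← Complex.exp_add]; congr 1; push_cast; ring
      simp only [Ker, h4]
      simp only [Complex.ofReal_zero, mul_zero, add_zero, pow_one]
      ring
    have e2 : ∫ r in Ioi (0 : ℝ), ∑' p, F p r
        = Complex.exp t * J 1 1 (s, 0) - J 1 1 (s, s * t) := by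
      rw [integral_congr_ae (Eventually.of_forall e1),
        integral_sub ((Ker_int 1 1 (s, 0) (by norm_num)).const_mul _) (Ker_int 1 1 (s, s * t) hst),
        integral_const_mul]
      rfl
    have e3 : om * (((s * t * Real.exp t : ℝ) : ℂ) * J 1 1 (s, 0)
        - ((s * t : ℝ) : ℂ) * J 1 1 (s, s * t)) =
        om * (s * t : ℂ) * ∫ r in Ioi (0 : ℝ), ∑' p, F p r := by
      rw [e2]; push_cast; ring
    rw [e3]
    convert h2 using 2 with p
    have e4 : om * (s * t : ℂ) * ∫ r in Ioi (0 : ℝ), F p r =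
        ((((p.1 + 1)! : ℝ) / ((p.1 + 1 + p.2)! : ℝ) * s ^ (p.1 + 1)
        * t ^ (p.1 + 1 + p.2 + 1) : ℝ) : ℂ) := by
      simp only [hF]
      rw [integral_const_mul]
      push_cast
      rw [← ker0_integral (p.1 + 1)]
      simp only [hc]
      ring
    rw [e4, Complex.ofReal_re]
  · have hg1 := summable_geometric_of_lt_one (r := 2 * |s| * |t|) (by positivity)
      (by nlinarith [abs_nonneg s, abs_nonneg t])
    have hg2 := (summable_geometric_of_lt_one (abs_nonneg t) (by linarith)).mul_left (2 * |t|)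
    refine Summable.of_nonneg_of_le (fun p => integral_nonneg fun _ => norm_nonneg _) ?_
      (hg1.mul_of_nonneg hg2 (fun _ => by positivity) (fun _ => by positivity))
    rintro ⟨m, i⟩
    simp only [hF]
    simp_rw [norm_mul (c (m, i))]
    rw [integral_const_mul]
    refine (mul_le_mul_of_nonneg_left (ker0_norm_integral (m + 1)) (norm_nonneg _)).trans ?_
    simp only [hc, norm_div, norm_mul, norm_pow, Complex.norm_real, Complex.norm_natCast,
      Real.norm_eq_abs]
    have hf : ((m + 1)! : ℝ) ≤ ((m + 1 + i)! : ℝ) := by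
      exact_mod_cast Nat.factorial_le (by omega)
    have hpos : (0 : ℝ) < ((m + 1 + i)! : ℝ) := by positivity
    calc |s| ^ m * |t| ^ (m + 1 + i) / ((m + 1 + i)! : ℝ) * (2 ^ (m + 1) * ((m + 1)! : ℝ))
        ≤ |s| ^ m * |t| ^ (m + 1 + i) / ((m + 1 + i)! : ℝ) * (2 ^ (m + 1) * ((m + 1 + i)! : ℝ)) := by
          gcongr
      _ = |s| ^ m * |t| ^ (m + 1 + i) * 2 ^ (m + 1) := by field_simp
      _ = _ := by rw [mul_pow, mul_pow]; ring

/-- the correction function -/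
def H (y : ℝ × ℝ × ℝ) : ℝ :=
  (om * ((y.2.2 : ℂ) * J 1 1 (y.1, 0) - (y.2.1 : ℂ) * J 1 1 (y.1, y.2.1))).re

lemma H_contDiffAt : ContDiffAt ℝ (⊤ : ℕ∞) H 0 := by
  have hJ1 : ContDiffAt ℝ (⊤ : ℕ∞) (fun y : ℝ × ℝ × ℝ => J 1 1 (y.1, 0)) 0 :=
    ContDiffAt.comp (g := J 1 1) (f := fun y : ℝ × ℝ × ℝ => (y.1, (0 : ℝ))) 0
      (J_contDiffAt 1 1) (by fun_prop)
  have hJ2 : ContDiffAt ℝ (⊤ : ℕ∞) (fun y : ℝ × ℝ × ℝ => J 1 1 (y.1, y.2.1)) 0 :=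
    ContDiffAt.comp (g := J 1 1) (f := fun y : ℝ × ℝ × ℝ => (y.1, y.2.1)) 0
      (J_contDiffAt 1 1) (by fun_prop)
  have h1 : ContDiffAt ℝ (⊤ : ℕ∞) (fun y : ℝ × ℝ × ℝ => (y.2.2 : ℂ)) 0 :=
    Complex.ofRealCLM.contDiff.contDiffAt.comp (f := fun y : ℝ × ℝ × ℝ => y.2.2) 0 (by fun_prop)
  have h2 : ContDiffAt ℝ (⊤ : ℕ∞) (fun y : ℝ × ℝ × ℝ => (y.2.1 : ℂ)) 0 :=
    Complex.ofRealCLM.contDiff.contDiffAt.comp (f := fun y : ℝ × ℝ × ℝ => y.2.1) 0 (by fun_prop)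
  exact Complex.reCLM.contDiff.contDiffAt.comp (0 : ℝ × ℝ × ℝ)
    (contDiffAt_const.mul ((h1.mul hJ1).sub (h2.mul hJ2)))

lemma g4_eq (x : ℝ × ℝ) (hs : |x.1| < 1 / 2) (ht : |x.2| < 1 / 2) :
    g4 x = H (x.1, x.1 * x.2, x.1 * x.2 * Real.exp x.2) :=
  (g4_hasSum x.1 x.2 hs ht).tsum_eq

/-- `f` and `g` are $C^\infty$ L equivalent: there is a $C^\infty$ map $π$ defined near
$0$ in $ℝ^4$, with $π(0)=0$ and invertible derivative at $0$, such that $π ∘ g = f$ near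
$0$ in $ℝ^2$. -/
theorem fmap_gmap_smooth_L_equivalent :
    ∃ π : ℝ × ℝ × ℝ × ℝ → ℝ × ℝ × ℝ × ℝ,
      ContDiffAt ℝ (⊤ : ℕ∞) π 0 ∧ π 0 = 0 ∧
      (∃ D : (ℝ × ℝ × ℝ × ℝ) ≃L[ℝ] ℝ × ℝ × ℝ × ℝ,
        HasFDerivAt π (D : (ℝ × ℝ × ℝ × ℝ) →L[ℝ] ℝ × ℝ × ℝ × ℝ) 0) ∧
      ∀ᶠ x : ℝ × ℝ in 𝓝 0, π (gmap x) = fmap x := by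

  let P : (ℝ × ℝ × ℝ × ℝ) →L[ℝ] (ℝ × ℝ × ℝ) :=
    (ContinuousLinearMap.fst ℝ ℝ (ℝ × ℝ × ℝ)).prod
      (((ContinuousLinearMap.fst ℝ ℝ (ℝ × ℝ)).prod
        ((ContinuousLinearMap.fst ℝ ℝ ℝ).comp (ContinuousLinearMap.snd ℝ ℝ (ℝ × ℝ)))).comp
        (ContinuousLinearMap.snd ℝ ℝ (ℝ × ℝ × ℝ)))
  let E4 : ℝ →L[ℝ] (ℝ × ℝ × ℝ × ℝ) :=
    (0 : ℝ →L[ℝ] ℝ).prod ((0 : ℝ →L[ℝ] ℝ).prod ((0 : ℝ →L[ℝ] ℝ).prod (ContinuousLinearMap.id ℝ ℝ)))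
  have hPE : ∀ a, P (E4 a) = 0 := fun a => rfl
  have hH : HasFDerivAt H (fderiv ℝ H 0) 0 :=
    (H_contDiffAt.differentiableAt (by simp)).hasFDerivAt
  set L := fderiv ℝ H 0
  have hHP : ContDiffAt ℝ (⊤ : ℕ∞) (fun y => H (P y)) 0 := by
    refine ContDiffAt.comp (g := H) 0 ?_ P.contDiff.contDiffAt
    rw [map_zero]; exact H_contDiffAt
  have hHPd : HasFDerivAt (fun y => H (P y)) (L.comp P) 0 := by
    refine HasFDerivAt.comp (g := H) 0 ?_ P.hasFDerivAt
    rw [map_zero]; exact hH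
  refine ⟨fun y => y - E4 (H (P y)), ?_, ?_, ?_, ?_⟩
  · exact contDiffAt_id.sub (E4.contDiff.contDiffAt.comp 0 hHP)
  · have : H 0 = 0 := by simp [H]
    simp [this]
  · refine ⟨ContinuousLinearEquiv.equivOfInverse
      (ContinuousLinearMap.id ℝ _ - E4.comp (L.comp P))
      (ContinuousLinearMap.id ℝ _ + E4.comp (L.comp P)) ?_ ?_, ?_⟩
    · intro y
      simp [hPE]
    · intro y
      simp [hPE]
    · exact (hasFDerivAt_id _).sub (E4.hasFDerivAt.comp 0 hHPd)
  · have h1 : ∀ᶠ x : ℝ × ℝ in 𝓝 0, |x.1| < 1 / 2 :=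
      (isOpen_lt (by fun_prop) continuous_const).mem_nhds (by simp)
    have h2 : ∀ᶠ x : ℝ × ℝ in 𝓝 0, |x.2| < 1 / 2 :=
      (isOpen_lt (by fun_prop) continuous_const).mem_nhds (by simp)
    filter_upwards [h1, h2] with x hx1 hx2
    have e : P (gmap x) = (x.1, x.1 * x.2, x.1 * x.2 * Real.exp x.2) := rfl
    simp only [e, ← g4_eq x hx1 hx2]
    simp [gmap, fmap, E4]
end
end

section
/- Define f, g : ℝ² → ℝ⁴ near 0 by f(x₁,x₂) = (x₁, x₁x₂, x₁x₂e^{x₂}, 0) and g(x₁,x₂) = (x₁, x₁x₂, x₁x₂e^{x₂}, g₄(x₁,x₂)), where g₄(x₁,x₂) = Σ_{k=1}^{∞} Σ_{i=0}^{∞} (k!/(k+i)!)·x₁^{k}·x₂^{k+i+1}. Then f and g are not analytically R-L equivalent: there do not exist maps τ defined near 0 in ℝ² and π defined near 0 in ℝ⁴, both real analytic at 0, with τ(0)=0, π(0)=0 and invertible derivatives at 0, such that π∘f = g∘τ on a neighborhood of 0 in ℝ². -/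
open scoped Nat Topology

noncomputable section

theorem inv_aux {E : Type*} [NormedAddCommGroup E] [NormedSpace ℝ E] [CompleteSpace E]
    (ff : E → E) (hff : AnalyticAt ℝ ff 0) (h0 : ff 0 = 0) (D : E ≃L[ℝ] E)
    (hD : HasFDerivAt ff (D : E →L[ℝ] E) 0) :
    Filter.map ff (𝓝 0) = 𝓝 0 ∧ ∃ gg : E → E, AnalyticAt ℝ gg 0 ∧ gg 0 = 0 ∧
      HasFDerivAt gg (D.symm : E →L[ℝ] E) 0 ∧ ∀ᶠ z in 𝓝 0, gg (ff z) = z := by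
  have hc : ContDiffAt ℝ ⊤ ff 0 := hff.contDiffAt
  have hs := hc.hasStrictFDerivAt' hD (by simp)
  refine ⟨by simpa [h0] using hs.map_nhds_eq_of_equiv, hs.localInverse ff D 0, ?_, ?_, ?_, ?_⟩
  · have := hc.to_localInverse hD (by simp)
    rw [h0] at this
    exact this.analyticAt
  · have := hs.localInverse_apply_image
    rwa [h0] at this
  · have := hs.to_localInverse.hasFDerivAt
    rwa [h0] at this
  · exact hs.eventually_left_inverse

theorem coeff_unique {a b : ℕ → ℝ} {ff : ℝ → ℝ}
    (ha : ∀ᶠ x in 𝓝 (0:ℝ), HasSum (fun n => x ^ n * a n) (ff x))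
    (hb : ∀ᶠ x in 𝓝 (0:ℝ), HasSum (fun n => x ^ n * b n) (ff x)) : a = b := by
  have h1 : HasFPowerSeriesAt ff (FormalMultilinearSeries.ofScalars ℝ a) 0 := by
    rw [hasFPowerSeriesAt_iff]
    simpa using ha
  have h2 : HasFPowerSeriesAt ff (FormalMultilinearSeries.ofScalars ℝ b) 0 := by
    rw [hasFPowerSeriesAt_iff]
    simpa using hb
  ext n
  simpa using congr_arg (FormalMultilinearSeries.coeff · n) (h1.eq_formalMultilinearSeries h2)

def bcoef (y : ℝ) (k : ℕ) : ℝ :=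
  (k ! : ℝ) * (y * (Real.exp y - ∑ j ∈ Finset.range k, y ^ j / (j ! : ℝ))) - if k = 0 then y * Real.exp y else 0

theorem g4_hasSum_s15 (x y : ℝ) (hx : |x| < 1) (hy : |y| < 1) :
    HasSum (fun n => x ^ n * bcoef y n) (g4 (x, y)) := by
  have hsum : Summable (fun p : ℕ × ℕ => (((p.1 + 1)! : ℝ) / ((p.1 + 1 + p.2)! : ℝ)) * x ^ (p.1 + 1) * y ^ (p.1 + 1 + p.2 + 1)) := by
    have h1 : Summable (fun p : ℕ × ℕ => |x| ^ p.1 * |y| ^ p.2) :=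
      (summable_geometric_of_lt_one (abs_nonneg x) hx).mul_of_nonneg
        (summable_geometric_of_lt_one (abs_nonneg y) hy) (fun _ => by positivity) (fun _ => by positivity)
    refine Summable.of_norm_bounded h1 ?_
    rintro ⟨k, i⟩
    simp only [norm_mul, norm_pow, Real.norm_eq_abs]
    have e1 : |((k + 1)! : ℝ) / ((k + 1 + i)! : ℝ)| ≤ 1 := by
      rw [abs_of_nonneg (by positivity)]
      apply div_le_one_of_le₀ _ (by positivity)
      exact_mod_cast Nat.factorial_le (by omega)
    have e2 : |x| ^ (k+1) ≤ |x| ^ k := pow_le_pow_of_le_one (abs_nonneg x) hx.le (by omega)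
    have e3 : |y| ^ (k+1+i+1) ≤ |y| ^ i := pow_le_pow_of_le_one (abs_nonneg y) hy.le (by omega)
    calc _ ≤ 1 * |x| ^ k * |y| ^ i := by gcongr
      _ = _ := by ring
  have hin : ∀ k : ℕ, HasSum (fun i : ℕ => (((k + 1)! : ℝ) / ((k + 1 + i)! : ℝ)) * x ^ (k + 1) * y ^ (k + 1 + i + 1))
      (x ^ (k+1) * bcoef y (k+1)) := by
    intro k
    have h1 : HasSum (fun j : ℕ => y ^ j / (j ! : ℝ)) (Real.exp y) := by
      rw [Real.exp_eq_exp_ℝ]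
      exact NormedSpace.expSeries_div_hasSum_exp y
    have h2 := (hasSum_nat_add_iff' (k+1)).mpr h1
    have h3 := h2.mul_left (x ^ (k+1) * (k+1)! * y)
    have e2 : x ^ (k+1) * bcoef y (k+1) = x ^ (k+1) * (k+1)! * y *
        (Real.exp y - ∑ i ∈ Finset.range (k + 1), y ^ i / (i ! : ℝ)) := by
      simp [bcoef]; ring
    rw [e2]
    refine h3.congr_fun ?_
    intro i
    rw [show i + (k+1) = k + 1 + i by ring]
    ring
  have h4 := hsum.hasSum.prod_fiberwise hin
  have h5 := (hasSum_nat_add_iff (f := fun n => x ^ n * bcoef y n) 1).mp h4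
  simpa [g4, bcoef] using h5

open Polynomial in
theorem poly_exp (Q : ℝ[X][X]) (h : ∀ y : ℝ, (Q.map (evalRingHom y)).eval (y * Real.exp y) = 0) :
    Q = 0 := by
  by_contra hQ
  set d := Q.natDegree with hd
  have hl : Q.coeff d ≠ 0 := by simpa [hd] using hQ
  have key : ∀ y : ℝ, (Q.coeff d * X ^ d).eval y =
      - ∑ k ∈ Finset.range d, (Q.coeff k * X ^ k).eval y * Real.exp (-((d - k : ℕ) : ℝ) * y) := by
    intro y
    have h1 := h y
    rw [eval_map, eval₂_eq_sum_range, Finset.sum_range_succ] at h1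
    have h2 : ∀ k ≤ d, (evalRingHom y) (Q.coeff k) * (y * Real.exp y) ^ k =
       ((Q.coeff k * X ^ k).eval y * Real.exp (-((d - k : ℕ) : ℝ) * y)) * Real.exp (d * y) := by
      intro k hk
      rw [mul_assoc _ (Real.exp _), ← Real.exp_add, mul_pow, ← Real.exp_nat_mul, Nat.cast_sub hk]
      simp
      ring_nf
    rw [← hd, h2 d le_rfl, Finset.sum_congr rfl (fun k hk => h2 k (Finset.mem_range.mp hk).le), ← Finset.sum_mul,
      ← add_mul] at h1
    have h3 := (mul_eq_zero.mp h1).resolve_right (Real.exp_ne_zero _)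
    simp only [Nat.sub_self, Nat.cast_zero, neg_zero, zero_mul, Real.exp_zero, mul_one] at h3
    linarith
  have lim : Filter.Tendsto (fun y => (Q.coeff d * X ^ d).eval y) Filter.atTop (𝓝 0) := by
    simp_rw [key]
    rw [show (0:ℝ) = - ∑ k ∈ Finset.range d, 0 by simp]
    refine (tendsto_finsetSum _ fun k hk => ?_).neg
    have hk' : 0 < d - k := by have := Finset.mem_range.mp hk; omega
    have hk'' : (0:ℝ) < ((d - k : ℕ) : ℝ) := by exact_mod_cast hk'
    have h0 := ((Q.coeff k * X ^ k).tendsto_div_exp_atTop).norm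
    rw [norm_zero] at h0
    refine squeeze_zero_norm' ?_ h0
    filter_upwards [Filter.eventually_ge_atTop 0] with y hy
    rw [norm_mul, norm_div, div_eq_mul_inv, Real.norm_of_nonneg (Real.exp_pos _).le,
      Real.norm_of_nonneg (Real.exp_pos _).le, ← Real.exp_neg]
    gcongr
    have : (1:ℝ) ≤ ((d - k : ℕ) : ℝ) := by exact_mod_cast hk'
    nlinarith
  rw [Polynomial.tendsto_nhds_iff] at lim
  have : Q.coeff d * X ^ d = 0 := by
    simpa using lim.1
  simp_all

theorem ml_poly (n : ℕ) (M : ContinuousMultilinearMap ℝ (fun _ : Fin n => ℝ × ℝ × ℝ) ℝ) :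
    ∃ Q : Polynomial (Polynomial ℝ), ∀ v w : ℝ,
      (Q.map (Polynomial.evalRingHom v)).eval w = M (fun _ => (1, v, w)) := by
  let e : Fin 3 → ℝ × ℝ × ℝ := ![(1,0,0),(0,1,0),(0,0,1)]
  let c : Fin 3 → Polynomial (Polynomial ℝ) := ![1, Polynomial.C Polynomial.X, Polynomial.X]
  refine ⟨∑ r : Fin n → Fin 3, (∏ i, c (r i)) * Polynomial.C (Polynomial.C (M fun i => e (r i))), ?_⟩
  intro v w
  let d : Fin 3 → ℝ := ![1, v, w]
  have h1 : ∀ j, ((c j).map (Polynomial.evalRingHom v)).eval w = d j := by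
    intro j; fin_cases j <;> simp [c, d]
  have h2 : ((1:ℝ), v, w) = ∑ j, d j • e j := by
    simp [Fin.sum_univ_three, d, e]
  rw [h2, ContinuousMultilinearMap.map_sum]
  simp_rw [ContinuousMultilinearMap.map_smul_univ]
  simp [Polynomial.map_sum, Polynomial.eval_finsetSum, Polynomial.map_prod, Polynomial.eval_prod, h1]

theorem no_F (F : ℝ × ℝ × ℝ → ℝ) (hF : AnalyticAt ℝ F 0)
    (h : ∀ᶠ y in 𝓝 (0:ℝ), ∀ᶠ x in 𝓝 (0:ℝ), F (x, x * y, x * y * Real.exp y) = g4 (x, y)) : False := by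
  obtain ⟨p, hp⟩ := hF
  have hs := hp.eventually_hasSum
  have hray : ∀ v w : ℝ, ∀ᶠ x in 𝓝 (0:ℝ),
      HasSum (fun n => x ^ n * p n (fun _ => (1, v, w))) (F (x, x * v, x * w)) := by
    intro v w
    have hc : Filter.Tendsto (fun x : ℝ => (x, x * v, x * w)) (𝓝 0) (𝓝 0) := by
      have : Continuous (fun x : ℝ => (x, x * v, x * w)) := by fun_prop
      simpa [← Prod.zero_eq_mk] using this.tendsto 0
    filter_upwards [hc.eventually hs] with x hx
    rw [zero_add] at hx
    refine hx.congr_fun ?_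
    intro n
    have : (x, x * v, x * w) = x • ((1:ℝ), v, w) := by simp
    rw [this]
    simpa using ((p n).map_smul_univ (fun _ => x) (fun _ => ((1:ℝ), v, w))).symm
  have hcoef : ∀ n, ∀ᶠ y in 𝓝 (0:ℝ), p n (fun _ => (1, y, y * Real.exp y)) = bcoef y n := by
    intro n
    have hy1 : ∀ᶠ y in 𝓝 (0:ℝ), |y| < 1 := by
      have := (continuous_abs (G := ℝ)).tendsto 0
      rw [abs_zero] at this
      exact this.eventually (gt_mem_nhds one_pos)
    filter_upwards [h, hy1] with y hy hy'
    have e := coeff_unique (a := fun n => p n (fun _ => (1, y, y * Real.exp y))) (b := bcoef y)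
      (ff := fun x => g4 (x, y)) ?_ ?_
    · exact congr_fun e n
    · filter_upwards [hy, hray y (y * Real.exp y)] with x h1 h2
      rw [← h1, mul_assoc]
      exact h2
    · filter_upwards [hy1] with x hx
      exact g4_hasSum_s15 x y hx hy'
  have hfact : ∀ n, n ≠ 0 → p n (fun _ => (1, 0, 1)) = (n ! : ℝ) := by
    intro n hn
    obtain ⟨Q, hQ⟩ := ml_poly n (p n)
    let R : Polynomial (Polynomial ℝ) := Polynomial.C (Polynomial.C (n ! : ℝ)) *
      (Polynomial.X - Polynomial.C (∑ j ∈ Finset.range n, Polynomial.C (1 / (j ! : ℝ)) * Polynomial.X ^ (j+1)))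
    have hR : ∀ v w : ℝ, (R.map (Polynomial.evalRingHom v)).eval w =
        (n ! : ℝ) * (w - ∑ j ∈ Finset.range n, 1 / (j ! : ℝ) * v ^ (j+1)) := by
      intro v w
      simp [R, Polynomial.eval_finsetSum, Polynomial.map_sum]
    have hz : Q - R = 0 := by
      apply poly_exp
      have hAn : AnalyticOnNhd ℝ (fun y : ℝ => ((Q - R).map (Polynomial.evalRingHom y)).eval (y * Real.exp y)) Set.univ := by
        intro y _
        simp_rw [Polynomial.eval_map, Polynomial.eval₂_eq_sum_range]
        simp only [Polynomial.coe_evalRingHom]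
        apply Finset.analyticAt_fun_sum
        intro k _
        apply AnalyticAt.mul
        · exact AnalyticOnNhd.eval_polynomial _ y trivial
        · fun_prop
      have := hAn.eq_of_eventuallyEq (z₀ := 0) (g := fun _ => 0) (fun _ _ => analyticAt_const) ?_
      · exact fun y => congr_fun this y
      · filter_upwards [hcoef n] with y hy
        rw [Polynomial.map_sub, Polynomial.eval_sub, hQ, hR, hy]
        simp only [bcoef, hn, if_false, mul_sub, Finset.mul_sum, sub_zero]
        rw [sub_eq_zero]
        congr 1
        refine Finset.sum_congr rfl fun j _ => ?_
        ring
    rw [← hQ, sub_eq_zero.mp hz, hR]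
    simp
  have hdiv := hray 0 1
  have : ∃ x : ℝ, x ≠ 0 ∧ HasSum (fun n => x ^ n * p n (fun _ => (1, 0, 1))) (F (x, x * 0, x * 1)) := by
    obtain ⟨x, hx⟩ := ((hdiv.filter_mono nhdsWithin_le_nhds).and
      (self_mem_nhdsWithin : {0}ᶜ ∈ 𝓝[≠] (0:ℝ))).exists
    exact ⟨x, hx.2, hx.1⟩
  obtain ⟨x, hx0, hx⟩ := this
  have t1 := hx.summable.tendsto_atTop_zero
  have t2 := FloorSemiring.tendsto_pow_div_factorial_atTop (x⁻¹)
  have t3 := t1.mul t2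
  have t4 : Filter.Tendsto (fun _ : ℕ => (1:ℝ)) Filter.atTop (𝓝 (0 * 0)) := by
    refine t3.congr' ?_
    filter_upwards [Filter.eventually_ne_atTop 0] with n hn
    rw [hfact n hn]
    have : (n ! : ℝ) ≠ 0 := by positivity
    rw [inv_pow]
    field_simp
  have := tendsto_nhds_unique t4 tendsto_const_nhds
  simp at this

theorem g4_deriv (y : ℝ) (hy : |y| < 1) :
    HasDerivAt (fun x => g4 (x, y)) (y * (Real.exp y - 1)) 0 := by
  have h : HasFPowerSeriesAt (fun x => g4 (x, y)) (FormalMultilinearSeries.ofScalars ℝ (bcoef y)) 0 := by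
    rw [hasFPowerSeriesAt_iff]
    have hy1 : ∀ᶠ y in 𝓝 (0:ℝ), |y| < 1 := by
      have := (continuous_abs (G := ℝ)).tendsto 0
      rw [abs_zero] at this
      exact this.eventually (gt_mem_nhds one_pos)
    filter_upwards [hy1] with x hx
    simpa using g4_hasSum_s15 x y hx hy
  simpa [bcoef] using h.hasDerivAt
 

theorem fmap_gmap_not_analytically_RL_equivalent :
    ¬ ∃ (τ : ℝ × ℝ → ℝ × ℝ) (π : ℝ × ℝ × ℝ × ℝ → ℝ × ℝ × ℝ × ℝ),
      AnalyticAt ℝ τ 0 ∧ τ 0 = 0 ∧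
      (∃ Dτ : (ℝ × ℝ) ≃L[ℝ] ℝ × ℝ,
        HasFDerivAt τ (Dτ : (ℝ × ℝ) →L[ℝ] ℝ × ℝ) 0) ∧
      AnalyticAt ℝ π 0 ∧ π 0 = 0 ∧
      (∃ Dπ : (ℝ × ℝ × ℝ × ℝ) ≃L[ℝ] ℝ × ℝ × ℝ × ℝ,
        HasFDerivAt π (Dπ : (ℝ × ℝ × ℝ × ℝ) →L[ℝ] ℝ × ℝ × ℝ × ℝ) 0) ∧
      ∀ᶠ x : ℝ × ℝ in 𝓝 0, π (fmap x) = gmap (τ x) := by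
  rintro ⟨τ, π, hτ, hτ0, ⟨Dτ, hDτ⟩, hπ, hπ0, ⟨Dπ, hDπ⟩, heq⟩
  obtain ⟨mapτ, -⟩ := inv_aux τ hτ hτ0 Dτ hDτ
  obtain ⟨-, ρ, hρ, hρ0, hDρ, hρinv⟩ := inv_aux π hπ hπ0 Dπ hDπ
  have hfc : Filter.Tendsto fmap (𝓝 0) (𝓝 0) := by
    have : Continuous fmap := by unfold fmap; fun_prop
    have := this.tendsto 0
    rwa [show fmap 0 = 0 by simp [fmap]] at this
  let P4 : (ℝ × ℝ × ℝ × ℝ) →L[ℝ] ℝ := (ContinuousLinearMap.snd ℝ ℝ ℝ).comp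
    ((ContinuousLinearMap.snd ℝ ℝ (ℝ × ℝ)).comp (ContinuousLinearMap.snd ℝ ℝ (ℝ × ℝ × ℝ)))
  let h : ℝ × ℝ × ℝ × ℝ → ℝ := fun z => P4 (ρ z)
  let L : (ℝ × ℝ × ℝ × ℝ) →L[ℝ] ℝ := P4.comp (Dπ.symm : (ℝ × ℝ × ℝ × ℝ) →L[ℝ] ℝ × ℝ × ℝ × ℝ)
  have hL : HasFDerivAt h L 0 := P4.hasFDerivAt.comp _ hDρ
  have hL0 : L ≠ 0 := by
    intro h0
    have := congr_arg (fun M => M (Dπ (0,0,0,1))) h0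
    simp [L, P4] at this
  have hhan : AnalyticAt ℝ h 0 := (P4.analyticAt _).comp hρ
  have hh0 : h 0 = 0 := by simp [h, hρ0]
  have hg : ∀ᶠ z : ℝ × ℝ in 𝓝 0, h (gmap z) = 0 := by
    rw [← mapτ, Filter.eventually_map]
    filter_upwards [heq, hfc.eventually hρinv] with z h1 h2
    simp only [h]
    rw [← h1, h2]
    simp [fmap, P4]
  have hcur : ∀ᶠ y in 𝓝 (0:ℝ), ∀ᶠ x in 𝓝 (0:ℝ), h (gmap (x, y)) = 0 := by
    have hsw : Filter.Tendsto (fun z : ℝ × ℝ => (z.2, z.1)) (𝓝 ((0:ℝ), (0:ℝ))) (𝓝 0) := by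
      have : Continuous (fun z : ℝ × ℝ => (z.2, z.1)) := by fun_prop
      exact this.tendsto (0, 0)
    have := hsw.eventually hg
    rw [nhds_prod_eq] at this
    exact this.curry
  have hy1 : ∀ᶠ y in 𝓝 (0:ℝ), |y| < 1 := by
    have := (continuous_abs (G := ℝ)).tendsto 0
    rw [abs_zero] at this
    exact this.eventually (gt_mem_nhds one_pos)
  have hg00 : ∀ y, gmap (0, y) = 0 := by
    intro y
    simp [gmap, g4]
  have hgd : ∀ y : ℝ, |y| < 1 → HasDerivAt (fun x => gmap (x, y))
      (1, y, y * Real.exp y, y * (Real.exp y - 1)) 0 := by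
    intro y hy
    unfold gmap
    refine (hasDerivAt_id _).prodMk (HasDerivAt.prodMk ?_ (HasDerivAt.prodMk ?_ (g4_deriv y hy)))
    · simpa using (hasDerivAt_id (0:ℝ)).mul_const y
    · simpa [mul_assoc] using (hasDerivAt_id (0:ℝ)).mul_const (y * Real.exp y)
  have hlin : ∀ᶠ y in 𝓝 (0:ℝ), L (1, y, y * Real.exp y, y * (Real.exp y - 1)) = 0 := by
    filter_upwards [hcur, hy1] with y h1 h2
    have hL' : HasFDerivAt h L (gmap (0, y)) := by rw [hg00]; exact hL
    have d1 := hL'.comp_hasDerivAt (0:ℝ) (hgd y h2)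
    have d2 : HasDerivAt (h ∘ fun x => gmap (x, y)) 0 0 :=
      (hasDerivAt_const (0:ℝ) (0:ℝ)).congr_of_eventuallyEq h1
    exact d1.unique d2
  obtain ⟨a, b, c, d, hLf⟩ : ∃ a b c d : ℝ, ∀ z, L z = a * z.1 + b * z.2.1 + c * z.2.2.1 + d * z.2.2.2 := by
    refine ⟨L (1,0,0,0), L (0,1,0,0), L (0,0,1,0), L (0,0,0,1), ?_⟩
    rintro ⟨z1, z2, z3, z4⟩
    have : (z1, z2, z3, z4) = z1 • ((1:ℝ),(0:ℝ),(0:ℝ),(0:ℝ)) + z2 • ((0:ℝ),(1:ℝ),(0:ℝ),(0:ℝ)) + z3 • ((0:ℝ),(0:ℝ),(1:ℝ),(0:ℝ))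
      + z4 • ((0:ℝ),(0:ℝ),(0:ℝ),(1:ℝ)) := by simp
    rw [this]
    simp only [map_add, map_smul, smul_eq_mul]
    simp
    ring
  have hd : d ≠ 0 := by
    intro hd
    have ha : a = 0 := by
      have := hlin.self_of_nhds
      simpa [hLf] using this
    have hlin2 : ∀ᶠ y in 𝓝 (0:ℝ), y * (b + c * Real.exp y) = 0 := by
      filter_upwards [hlin] with y hy
      rw [hLf] at hy
      simp only [hd, ha] at hy
      linarith
    obtain ⟨ε, hε, hball⟩ := Metric.eventually_nhds_iff.mp hlin2
    have e1 := hball (y := ε/2) (by simp [abs_of_pos hε]; linarith)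
    have e2 := hball (y := ε/3) (by simp [abs_of_pos hε]; linarith)
    have e1' := (mul_eq_zero.mp e1).resolve_left (by positivity)
    have e2' := (mul_eq_zero.mp e2).resolve_left (by positivity)
    have hlt : Real.exp (ε/3) < Real.exp (ε/2) := Real.exp_lt_exp.mpr (by linarith)
    have hc : c = 0 := by
      have : c * (Real.exp (ε/2) - Real.exp (ε/3)) = 0 := by linarith
      exact (mul_eq_zero.mp this).resolve_right (by linarith)
    have hb : b = 0 := by simpa [hc] using e1'
    apply hL0
    ext <;> simp [hLf, ha, hb, hc, hd]
  let Φ : ℝ × ℝ × ℝ × ℝ → ℝ × ℝ × ℝ × ℝ := fun z => (z.1, z.2.1, z.2.2.1, h z)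
  let q1 : (ℝ × ℝ × ℝ × ℝ) →L[ℝ] ℝ := ContinuousLinearMap.fst ℝ ℝ (ℝ × ℝ × ℝ)
  let q2 : (ℝ × ℝ × ℝ × ℝ) →L[ℝ] ℝ := (ContinuousLinearMap.fst ℝ ℝ (ℝ × ℝ)).comp (ContinuousLinearMap.snd ℝ ℝ (ℝ × ℝ × ℝ))
  let q3 : (ℝ × ℝ × ℝ × ℝ) →L[ℝ] ℝ := (ContinuousLinearMap.fst ℝ ℝ ℝ).comp
    ((ContinuousLinearMap.snd ℝ ℝ (ℝ × ℝ)).comp (ContinuousLinearMap.snd ℝ ℝ (ℝ × ℝ × ℝ)))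
  let M : (ℝ × ℝ × ℝ × ℝ) →L[ℝ] ℝ × ℝ × ℝ × ℝ := q1.prod (q2.prod (q3.prod L))
  have hM : HasFDerivAt Φ M 0 :=
    q1.hasFDerivAt.prodMk (q2.hasFDerivAt.prodMk (q3.hasFDerivAt.prodMk hL))
  have hΦ : AnalyticAt ℝ Φ 0 :=
    (q1.analyticAt 0).prod ((q2.analyticAt 0).prod ((q3.analyticAt 0).prod hhan))
  have hinj : Function.Injective (M : (ℝ × ℝ × ℝ × ℝ) →ₗ[ℝ] ℝ × ℝ × ℝ × ℝ) := by
    rw [injective_iff_map_eq_zero]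
    rintro ⟨z1, z2, z3, z4⟩ hz
    simp [M, q1, q2, q3, hLf] at hz
    obtain ⟨rfl, rfl, rfl, h4⟩ := hz
    simp [hd] at h4
    simp [h4]
  let DM : (ℝ × ℝ × ℝ × ℝ) ≃L[ℝ] ℝ × ℝ × ℝ × ℝ :=
    (LinearEquiv.ofInjectiveEndo _ hinj).toContinuousLinearEquiv
  have hDM : HasFDerivAt Φ (DM : (ℝ × ℝ × ℝ × ℝ) →L[ℝ] ℝ × ℝ × ℝ × ℝ) 0 := by
    have e : (DM : (ℝ × ℝ × ℝ × ℝ) →L[ℝ] ℝ × ℝ × ℝ × ℝ) = M := ContinuousLinearMap.ext fun z => rfl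
    rw [e]; exact hM
  obtain ⟨-, Ψ, hΨ, -, -, hΨinv⟩ := inv_aux Φ hΦ (by simp [Φ, hh0]) DM hDM
  let ι : (ℝ × ℝ × ℝ) →L[ℝ] ℝ × ℝ × ℝ × ℝ :=
    (ContinuousLinearMap.fst ℝ ℝ (ℝ × ℝ)).prod
      (((ContinuousLinearMap.fst ℝ ℝ ℝ).comp (ContinuousLinearMap.snd ℝ ℝ (ℝ × ℝ))).prod
       (((ContinuousLinearMap.snd ℝ ℝ ℝ).comp (ContinuousLinearMap.snd ℝ ℝ (ℝ × ℝ))).prod 0))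
  refine no_F (fun u => P4 (Ψ (ι u))) ?_ ?_
  · refine (P4.analyticAt _).comp (AnalyticAt.comp ?_ (ι.analyticAt 0))
    rw [map_zero]; exact hΨ
  · filter_upwards [hcur, hy1] with y h1 h2
    have hc := (hgd y h2).continuousAt.tendsto
    rw [hg00] at hc
    filter_upwards [h1, hc.eventually hΨinv] with x h3 h4
    have : ι (x, x * y, x * y * Real.exp y) = Φ (gmap (x, y)) := by
      simp only [Φ, h3]
      simp [ι, gmap]
    rw [this, h4]
    simp [P4, gmap]
end
end

section
/- There exist two real analytic map germs f, g : (ℝ²,0) → (ℝ⁴,0) that are C^∞ R-L equivalent but not analytically R-L equivalent. -/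
open scoped Topology
open MeasureTheory Set Filter


noncomputable def EI (k m : ℕ) (a : ℝ) : ℝ :=
  ∫ s in Ioi (0:ℝ), Real.exp (-s) * s ^ k / (1 + a ^ 2 * s) ^ m

lemma integrable_exp_pow (k : ℕ) :
    IntegrableOn (fun s : ℝ => Real.exp (-s) * s ^ k) (Ioi 0) := by
  have h := Real.GammaIntegral_convergent (s := k + 1) (by positivity)
  refine h.congr_fun (fun x hx => ?_) measurableSet_Ioi
  simp

lemma integral_exp_pow (k : ℕ) :
    ∫ s in Ioi (0:ℝ), Real.exp (-s) * s ^ k = k.factorial := by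
  rw [← Real.Gamma_nat_eq_factorial, Real.Gamma_eq_integral (by positivity)]
  refine setIntegral_congr_fun measurableSet_Ioi (fun x hx => ?_)
  simp

lemma EI_meas (k m : ℕ) (a : ℝ) : AEStronglyMeasurable
    (fun s : ℝ => Real.exp (-s) * s ^ k / (1 + a ^ 2 * s) ^ m) (volume.restrict (Ioi 0)) := by
  apply Measurable.aestronglyMeasurable
  fun_prop

lemma EI_bound (k m : ℕ) (a s : ℝ) (hs : 0 < s) :
    ‖Real.exp (-s) * s ^ k / (1 + a ^ 2 * s) ^ m‖ ≤ Real.exp (-s) * s ^ k := by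
  have h1 : 1 ≤ (1 + a ^ 2 * s) ^ m := one_le_pow₀ (by nlinarith [mul_nonneg (sq_nonneg a) hs.le])
  have h2 : 0 ≤ Real.exp (-s) * s ^ k := by positivity
  rw [Real.norm_of_nonneg (by positivity)]
  exact div_le_self h2 h1

lemma EI_integrable (k m : ℕ) (a : ℝ) : IntegrableOn
    (fun s : ℝ => Real.exp (-s) * s ^ k / (1 + a ^ 2 * s) ^ m) (Ioi 0) := by
  refine (integrable_exp_pow k).mono' (EI_meas k m a) ?_
  filter_upwards [ae_restrict_mem measurableSet_Ioi] with s hs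
  exact EI_bound k m a s hs

lemma EI_aux (k m : ℕ) (x s : ℝ) (hp : 0 < 1 + x ^ 2 * s) :
    -2 * (m:ℝ) * x * (Real.exp (-s) * s ^ (k + 1) * ((1 + x ^ 2 * s) ^ (m + 1))⁻¹) =
    Real.exp (-s) * s ^ k * (-(↑m * (1 + x ^ 2 * s) ^ (m - 1) * (2 * x * s)) / ((1 + x ^ 2 * s) ^ m) ^ 2) := by
  generalize 1 + x ^ 2 * s = P at hp
  cases m with
  | zero => simp
  | succ m =>
    simp only [Nat.add_sub_cancel]
    push_cast
    field_simp
    ring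

lemma EI_hasDerivAt (k m : ℕ) (a : ℝ) :
    HasDerivAt (EI k m) ((-2 * m * a) * EI (k+1) (m+1) a) a := by
  have key := hasDerivAt_integral_of_dominated_loc_of_deriv_le
    (μ := volume.restrict (Ioi (0:ℝ)))
    (F := fun a s => Real.exp (-s) * s ^ k / (1 + a ^ 2 * s) ^ m)
    (F' := fun a s => (-2 * m * a) * (Real.exp (-s) * s ^ (k+1) / (1 + a ^ 2 * s) ^ (m+1)))
    (x₀ := a) (s := Metric.ball a 1)
    (bound := fun s => (2 * m * (|a| + 1)) * (Real.exp (-s) * s ^ (k+1)))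
    (Metric.ball_mem_nhds a one_pos) (Eventually.of_forall fun x => EI_meas k m x)
    (EI_integrable k m a) ((EI_meas (k+1) (m+1) a).const_mul _) ?_
    ((integrable_exp_pow (k+1)).const_mul _) ?_
  · have := key.2
    rw [integral_const_mul] at this
    exact this
  · filter_upwards [ae_restrict_mem measurableSet_Ioi] with s hs x hx
    rw [norm_mul]
    have h2 : |x| ≤ |a| + 1 := by
      have : |x - a| < 1 := by simpa [Real.dist_eq] using hx
      have := abs_sub_abs_le_abs_sub x a
      linarith
    refine mul_le_mul ?_ (EI_bound _ _ x s hs) (norm_nonneg _) (by positivity)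
    rw [Real.norm_eq_abs, abs_mul, abs_mul]
    simp only [abs_neg, Nat.abs_ofNat, Nat.abs_cast]
    gcongr
  · filter_upwards [ae_restrict_mem measurableSet_Ioi] with s hs x hx
    have hp : 0 < 1 + x ^ 2 * s := by
      have : (0:ℝ) < s := hs
      positivity
    have h1 : HasDerivAt (fun x : ℝ => 1 + x ^ 2 * s) (2 * x * s) x := by
      have := ((hasDerivAt_pow 2 x).mul_const s).const_add 1
      simpa using this
    have h2 := ((h1.fun_pow m).fun_inv (pow_ne_zero m hp.ne')).const_mul (Real.exp (-s) * s ^ k)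
    simp only [div_eq_mul_inv]
    exact h2.congr_deriv (EI_aux k m x s hp).symm

lemma EI_contDiff (n : ℕ) : ∀ k m : ℕ, ContDiff ℝ n (EI k m) := by
  induction n with
  | zero =>
    intro k m
    exact contDiff_zero.2 (continuous_iff_continuousAt.2 fun a => (EI_hasDerivAt k m a).continuousAt)
  | succ n ih =>
    intro k m
    push_cast
    refine contDiff_succ_iff_deriv.2 ⟨fun a => (EI_hasDerivAt k m a).differentiableAt, by simp, ?_⟩
    have : deriv (EI k m) = fun a => (-2 * m * a) * EI (k+1) (m+1) a :=
      funext fun a => (EI_hasDerivAt k m a).deriv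
    rw [this]
    exact (contDiff_const.mul contDiff_id).mul (ih _ _)

noncomputable def EE (a : ℝ) : ℝ := EI 0 1 a

lemma EE_smooth : ContDiff ℝ (⊤ : ℕ∞) EE := contDiff_infty.2 fun n => EI_contDiff n 0 1

lemma EE_bound (a : ℝ) : |EE a| ≤ 1 := by
  have := norm_integral_le_of_norm_le (integrable_exp_pow 0) (f := fun s : ℝ => Real.exp (-s) * s ^ 0 / (1 + a ^ 2 * s) ^ 1) (by
    filter_upwards [ae_restrict_mem measurableSet_Ioi] with s hs
    exact EI_bound 0 1 a s hs)
  rw [integral_exp_pow] at this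
  simpa [EE, EI] using this

lemma EE_asymp (a : ℝ) (N : ℕ) :
    |EE a - ∑ n ∈ Finset.range N, (-1) ^ n * (n.factorial : ℝ) * a ^ (2 * n)|
      ≤ N.factorial * a ^ (2 * N) := by
  have h : EE a - ∑ n ∈ Finset.range N, (-1) ^ n * (n.factorial : ℝ) * a ^ (2 * n)
      = ((-1) ^ N * a ^ (2 * N)) * EI N 1 a := by
    induction N with
    | zero => simp [EE]
    | succ N ih =>
      rw [Finset.sum_range_succ, ← sub_sub, ih]
      have : EI N 1 a = N.factorial - a ^ 2 * EI (N+1) 1 a := by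
        unfold EI
        rw [← integral_exp_pow, ← integral_const_mul, ← integral_sub (integrable_exp_pow N)
          ((EI_integrable (N+1) 1 a).const_mul _)]
        refine setIntegral_congr_fun measurableSet_Ioi (fun s hs => ?_)
        have hp : 0 < 1 + a ^ 2 * s := by
          have : (0:ℝ) < s := hs
          positivity
        have h3 := hp.ne'
        simp only [pow_one]
        rw [eq_sub_iff_add_eq, mul_div_assoc', ← add_div, div_eq_iff h3]
        ring
      rw [this]
      ring
  rw [h, abs_mul]
  have h1 : |EI N 1 a| ≤ N.factorial := by
    have := norm_integral_le_of_norm_le (integrable_exp_pow N) (f := fun s : ℝ => Real.exp (-s) * s ^ N / (1 + a ^ 2 * s) ^ 1) (by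
      filter_upwards [ae_restrict_mem measurableSet_Ioi] with s hs
      exact EI_bound N 1 a s hs)
    rw [integral_exp_pow] at this
    simpa [EI] using this
  have h2 : |(-1) ^ N * a ^ (2 * N)| = a ^ (2 * N) := by
    rw [abs_mul, abs_pow, abs_neg, abs_one, one_pow, one_mul, pow_mul, abs_of_nonneg (by positivity)]
  rw [h2, mul_comm]
  exact mul_le_mul_of_nonneg_right h1 (by rw [pow_mul]; positivity)


noncomputable def JJ (p : ℝ × ℝ) : ℝ :=
  p.2 * ∫ u in (0:ℝ)..1, Real.exp (p.2 * (1 - u)) * (1 + p.1 ^ 2 * p.2 * u)⁻¹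

noncomputable def intC : C(Icc (0:ℝ) 1, ℝ) →L[ℝ] ℝ :=
  LinearMap.mkContinuous
    { toFun := fun f => ∫ u in (0:ℝ)..1, f (projIcc 0 1 zero_le_one u)
      map_add' := fun f g => by
        simp only [ContinuousMap.add_apply]
        apply intervalIntegral.integral_add <;>
        · apply Continuous.intervalIntegrable
          exact (ContinuousMap.continuous _).comp continuous_projIcc
      map_smul' := fun c f => by
        simp } 1 (fun f => by
    have := intervalIntegral.norm_integral_le_of_norm_le_const (a := (0:ℝ)) (b := 1)
      (f := fun u => f (projIcc 0 1 zero_le_one u)) (C := ‖f‖) (fun x _ => f.norm_coe_le_norm _)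
    simpa using this)

noncomputable def idC : C(Icc (0:ℝ) 1, ℝ) := ⟨fun u => (u : ℝ), continuous_subtype_val⟩

lemma JJ_analytic (p : ℝ × ℝ) (hp : ∀ u ∈ Icc (0:ℝ) 1, 1 + p.1 ^ 2 * p.2 * u ≠ 0) :
    AnalyticAt ℝ JJ p := by
  have h1 : AnalyticAt ℝ (fun q : ℝ × ℝ => q.2) p := analyticAt_snd
  have h0 : AnalyticAt ℝ (fun q : ℝ × ℝ => q.1) p := analyticAt_fst
  have e1 : AnalyticAt ℝ (fun q : ℝ × ℝ => NormedSpace.exp (q.2 • (1 - idC))) p :=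
    (NormedSpace.exp_analytic (𝕂 := ℝ) (p.2 • (1 - idC))).comp_of_eq
      (h1.smul analyticAt_const) rfl
  have hu : IsUnit (1 + (p.1 ^ 2 * p.2) • idC) := by
    rw [ContinuousMap.isUnit_iff_forall_ne_zero]
    intro x
    simpa [idC] using hp x x.2
  have e2 : AnalyticAt ℝ (fun q : ℝ × ℝ => Ring.inverse (1 + (q.1 ^ 2 * q.2) • idC)) p := by
    obtain ⟨U, hU⟩ := hu
    have := analyticAt_inverse (𝕜 := ℝ) U
    refine AnalyticAt.comp_of_eq (g := Ring.inverse) this (f := fun q : ℝ × ℝ => (1 + (q.1 ^ 2 * q.2) • idC)) ?_ hU.symm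
    exact analyticAt_const.add (((h0.pow 2).mul h1).smul analyticAt_const)
  have e3 := h1.mul ((intC.analyticAt _).comp_of_eq (e1.mul e2) rfl)
  refine e3.congr ?_
  have : ∀ᶠ q : ℝ × ℝ in 𝓝 p, IsUnit (1 + (q.1 ^ 2 * q.2) • idC) := by
    have hc : ContinuousAt (fun q : ℝ × ℝ => 1 + (q.1 ^ 2 * q.2) • idC) p := by fun_prop
    exact hc.eventually (Units.isOpen.mem_nhds hu)
  filter_upwards [this] with q hq
  simp only [JJ, Pi.mul_apply, Function.comp_apply]
  congr 1
  simp only [intC, LinearMap.mkContinuous_apply, LinearMap.coe_mk, AddHom.coe_mk]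
  apply intervalIntegral.integral_congr
  intro u hu'
  rw [uIcc_of_le zero_le_one] at hu'
  simp only [ContinuousMap.mul_apply]
  rw [projIcc_of_mem _ hu']
  congr 1
  · have := NormedSpace.map_exp (ContinuousMap.evalAlgHom ℝ ℝ (⟨u, hu'⟩ : Icc (0:ℝ) 1))
      (by exact continuous_eval_const _) (q.2 • (1 - idC))
    simp only [← Real.exp_eq_exp_ℝ] at this
    refine this.trans ?_
    simp [idC]
  · have := congrArg (fun F : C(Icc (0:ℝ) 1, ℝ) => F ⟨u, hu'⟩) (Ring.inverse_mul_cancel _ hq)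
    simp [idC] at this
    exact eq_inv_of_mul_eq_one_left this

lemma phi_integrable (x y c : ℝ) (hc : 0 < 1 + x ^ 2 * c) :
    IntegrableOn (fun t : ℝ => Real.exp (y - t) * (1 + x ^ 2 * t)⁻¹) (Ioi c) := by
  have h1 : IntegrableOn (fun t : ℝ => (Real.exp y * (1 + x ^ 2 * c)⁻¹) * Real.exp (-t)) (Ioi c) :=
    (integrableOn_exp_neg_Ioi c).const_mul _
  refine h1.mono' (Measurable.aestronglyMeasurable (by fun_prop)) ?_
  filter_upwards [ae_restrict_mem measurableSet_Ioi] with t ht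
  have ht' : c < t := ht
  have h2 : 1 + x ^ 2 * c ≤ 1 + x ^ 2 * t := by gcongr
  have h3 : 0 < 1 + x ^ 2 * t := hc.trans_le h2
  rw [Real.norm_of_nonneg (by positivity), sub_eq_add_neg, Real.exp_add, mul_assoc, mul_assoc,
    mul_comm (1 + x ^ 2 * c)⁻¹]
  gcongr

lemma JJ_eq (x y w ρ : ℝ) (hρ : ρ ≠ 0) (h : 1 + x ^ 2 * y = ρ ^ 2) (hx : x = w * ρ) :
    JJ (x, y) = Real.exp y * EE x - EE w / ρ ^ 2 := by
  have hy : 0 < 1 + x ^ 2 * y := by rw [h]; positivity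
  have e1 : JJ (x, y) = ∫ t in (0:ℝ)..y, Real.exp (y - t) * (1 + x ^ 2 * t)⁻¹ := by
    have := intervalIntegral.mul_integral_comp_mul_left (a := (0:ℝ)) (b := 1) (c := y)
      (f := fun t => Real.exp (y - t) * (1 + x ^ 2 * t)⁻¹)
    rw [mul_zero, mul_one] at this
    rw [← this, JJ]
    congr 1
    apply intervalIntegral.integral_congr
    intro u _
    simp only [mul_assoc, mul_sub, mul_one]
  rw [e1, ← intervalIntegral.integral_Ioi_sub_Ioi' (phi_integrable x y 0 (by simp))
    (phi_integrable x y y hy)]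
  congr 1
  · rw [EE, EI, ← integral_const_mul]
    refine setIntegral_congr_fun measurableSet_Ioi (fun s hs => ?_)
    simp only [sub_eq_add_neg, Real.exp_add, div_eq_mul_inv]
    ring
  · have hp := (measurePreserving_add_left volume y).setIntegral_preimage_emb
      (measurableEmbedding_addLeft y) (fun t => Real.exp (y - t) * (1 + x ^ 2 * t)⁻¹) (Ioi y)
    rw [← hp, EE, EI, ← integral_div]
    have : (fun x => y + x) ⁻¹' Ioi y = Ioi 0 := by ext; simp
    rw [this]
    refine setIntegral_congr_fun measurableSet_Ioi (fun s hs => ?_)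
    have h4 : 1 + x ^ 2 * (y + s) = ρ ^ 2 * (1 + w ^ 2 * s) := by
      rw [mul_add, ← add_assoc, h, hx]; ring
    simp only [h4, pow_zero, mul_one, pow_one, sub_add_cancel_left, mul_inv, div_eq_mul_inv]
    ring

open Asymptotics in
lemma exp_flat (β : ℝ) (hβ : 0 < β) (N : ℕ) :
    (fun w : ℝ => Real.exp (-β / w)) =O[𝓝[>] 0] fun w => w ^ N := by
  have h1 : Tendsto (fun w : ℝ => w⁻¹) (𝓝[>] 0) atTop := tendsto_inv_nhdsGT_zero
  have h2 := (isLittleO_exp_neg_mul_rpow_atTop hβ (-(N:ℝ))).isBigO.comp_tendsto h1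
  refine h2.congr' ?_ ?_
  · exact Eventually.of_forall fun w => by simp [div_eq_mul_inv]
  · filter_upwards [self_mem_nhdsWithin] with w hw
    have : (0:ℝ) < w := hw
    simp

/-- coefficients of the divergent expansion -/
noncomputable def cc (k : ℕ) : ℝ := if Odd k then (-1) ^ (k / 2) * ((k / 2).factorial : ℝ) else 0

lemma cc_sum (w : ℝ) (N : ℕ) : ∑ k ∈ Finset.range (2 * N), cc k * w ^ k =
    w * ∑ n ∈ Finset.range N, (-1) ^ n * (n.factorial : ℝ) * w ^ (2 * n) := by
  induction N with
  | zero => simp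
  | succ N ih =>
    rw [mul_add, mul_one, Finset.sum_range_succ, Finset.sum_range_succ, ih, Finset.sum_range_succ]
    have h1 : cc (2 * N) = 0 := by simp [cc]
    have h2 : cc (2 * N + 1) = (-1) ^ N * (N.factorial : ℝ) := by
      have : (2 * N + 1) / 2 = N := by omega
      simp [cc, this]
    rw [h1, h2]
    ring

open Asymptotics in
lemma poly_zero (d : ℕ → ℝ)
    (h : ∀ N : ℕ, (fun w : ℝ => ∑ k ∈ Finset.range (2 * N), d k * w ^ k) =O[𝓝[>] 0] fun w => w ^ (2 * N)) :
    ∀ k, d k = 0 := by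
  intro k
  induction k using Nat.strong_induction_on with
  | _ k ih =>
    have h1 := h (k + 1)
    -- everything of order > k is O(w^(k+1))
    have h2 : (fun w : ℝ => d k * w ^ k) =O[𝓝[>] 0] fun w => w ^ (k + 1) := by
      have hpow : ∀ j, k + 1 ≤ j → (fun w : ℝ => w ^ j) =O[𝓝[>] (0:ℝ)] fun w => w ^ (k + 1) := by
        intro j hj
        refine IsBigO.of_bound 1 ?_
        have : Iic (1:ℝ) ∈ 𝓝[>] (0:ℝ) := nhdsWithin_le_nhds (Iic_mem_nhds one_pos)
        filter_upwards [self_mem_nhdsWithin, this] with w hw hw1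
        have hw0 : (0:ℝ) < w := hw
        rw [norm_pow, norm_pow, Real.norm_of_nonneg hw0.le, one_mul]
        exact pow_le_pow_of_le_one hw0.le hw1 hj
      have e : (fun w : ℝ => d k * w ^ k) = fun w => (∑ k ∈ Finset.range (2 * (k+1)), d k * w ^ k)
          - ∑ j ∈ Finset.Ico (k+1) (2 * (k+1)), d j * w ^ j := by
        funext w
        rw [← Finset.sum_range_add_sum_Ico _ (show k + 1 ≤ 2 * (k+1) by omega),
          Finset.sum_range_succ, Finset.sum_eq_zero]
        · ring
        · intro j hj
          rw [ih j (Finset.mem_range.1 hj), zero_mul]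
      rw [e]
      refine (h1.trans (hpow _ (by omega))).sub ?_
      refine IsBigO.fun_sum fun j hj => ?_
      exact (hpow j (Finset.mem_Ico.1 hj).1).const_mul_left _
    have h3 : Tendsto (fun w : ℝ => d k) (𝓝[>] (0:ℝ)) (𝓝 0) := by
      obtain ⟨C, hC⟩ := h2.bound
      have hz : Tendsto (fun w : ℝ => C * w) (𝓝[>] (0:ℝ)) (𝓝 0) := by
        have : Tendsto (fun w : ℝ => C * w) (𝓝 (0:ℝ)) (𝓝 (C * 0)) := by
          exact (continuous_const.mul continuous_id).tendsto _
        rw [mul_zero] at this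
        exact this.mono_left nhdsWithin_le_nhds
      refine squeeze_zero_norm' ?_ hz
      filter_upwards [hC, self_mem_nhdsWithin] with w hw hw0
      have hw0' : (0:ℝ) < w := hw0
      rw [norm_mul, norm_pow, norm_pow, Real.norm_of_nonneg hw0'.le, pow_succ', ← mul_assoc] at hw
      exact le_of_mul_le_mul_right hw (by positivity)
    exact tendsto_nhds_unique tendsto_const_nhds h3

open Asymptotics in
lemma EE_not_analytic (M : ℝ → ℝ) (hM : AnalyticAt ℝ M 0) (β : ℝ) (hβ : 0 < β)
    (h : (fun w => M w - w * EE w) =O[𝓝[>] 0] fun w => Real.exp (-β / w)) : False := by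
  obtain ⟨p, hp⟩ := hM
  have key : ∀ k, p.coeff k - cc k = 0 := by
    apply poly_zero
    intro N
    have a1 := (hp.isBigO_sub_partialSum_pow (2 * N)).mono (nhdsWithin_le_nhds (s := Ioi (0:ℝ)))
    have a1' : (fun y : ℝ => M (0 + y) - p.partialSum (2 * N) y) =O[𝓝[>] 0] fun w => w ^ (2 * N) := by
      refine a1.trans (IsBigO.of_bound 1 (Eventually.of_forall fun w => ?_))
      simp
    have a2 := h.trans (exp_flat β hβ (2 * N))
    have a3 : (fun w : ℝ => w * EE w - ∑ k ∈ Finset.range (2 * N), cc k * w ^ k) =O[𝓝[>] 0]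
        fun w => w ^ (2 * N) := by
      refine IsBigO.of_bound N.factorial ?_
      have : Iic (1:ℝ) ∈ 𝓝[>] (0:ℝ) := nhdsWithin_le_nhds (Iic_mem_nhds one_pos)
      filter_upwards [self_mem_nhdsWithin, this] with w hw hw1
      have hw0 : (0:ℝ) < w := hw
      have hw1' : w ≤ 1 := hw1
      rw [cc_sum, ← mul_sub, norm_mul, norm_pow, Real.norm_of_nonneg hw0.le]
      calc w * _ ≤ 1 * _ := by gcongr
        _ ≤ _ := by rw [one_mul]; exact EE_asymp w N
    refine ((a2.add a3).sub a1').congr_left fun w => ?_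
    simp only [FormalMultilinearSeries.partialSum, zero_add, sub_mul, Finset.sum_sub_distrib]
    have : ∑ k ∈ Finset.range (2 * N), (p k fun _ => w) = ∑ k ∈ Finset.range (2 * N), p.coeff k * w ^ k := by
      refine Finset.sum_congr rfl fun k _ => ?_
      rw [FormalMultilinearSeries.apply_eq_pow_smul_coeff, smul_eq_mul, mul_comm]
    rw [this]
    ring
  obtain ⟨r, hr⟩ := hp
  obtain ⟨r', hr'0, hr'⟩ := ENNReal.lt_iff_exists_nnreal_btwn.1 (hr.r_pos)
  have hr'p : 0 < r' := by exact_mod_cast hr'0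
  obtain ⟨C, hC, hb⟩ := p.norm_mul_pow_le_of_lt_radius (hr'.trans_le hr.r_le)
  have hb2 : ∀ n : ℕ, (n.factorial : ℝ) * (r':ℝ) ^ (2 * n + 1) ≤ C := by
    intro n
    refine le_trans (le_of_eq ?_) (hb (2 * n + 1))
    congr 1
    rw [FormalMultilinearSeries.norm_apply_eq_norm_coef, sub_eq_zero.1 (key (2 * n + 1))]
    have : (2 * n + 1) / 2 = n := by omega
    simp [cc, this]
  have ht := FloorSemiring.tendsto_pow_div_factorial_atTop (((r':ℝ) ^ 2)⁻¹)
  have hr2 : (0:ℝ) < r' := by exact_mod_cast hr'p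
  have hl : ∀ n : ℕ, (r':ℝ) / C ≤ (((r':ℝ) ^ 2)⁻¹) ^ n / n.factorial := by
    intro n
    rw [div_le_div_iff₀ hC (by positivity), inv_pow, inv_mul_eq_div, le_div_iff₀ (by positivity)]
    refine le_trans (le_of_eq ?_) (hb2 n)
    rw [pow_succ (r':ℝ) (2 * n), pow_mul]
    ring
  have := ge_of_tendsto' ht hl
  have : 0 < (r':ℝ) / C := by positivity
  linarith

lemma ift (F : ℝ × ℝ × ℝ × ℝ → ℝ) (hF : AnalyticAt ℝ F 0) (h0 : F 0 = 0)
    (L : (ℝ × ℝ × ℝ × ℝ) →L[ℝ] ℝ) (hL : HasFDerivAt F L 0) (hne : L (0, 0, 0, 1) ≠ 0) :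
    ∃ K : ℝ × ℝ × ℝ → ℝ, AnalyticAt ℝ K 0 ∧
      ∀ᶠ p in 𝓝 (0 : ℝ × ℝ × ℝ × ℝ), F p = 0 → p.2.2.2 = K (p.1, p.2.1, p.2.2.1) := by
  let pr1 : (ℝ × ℝ × ℝ × ℝ) →L[ℝ] ℝ := ContinuousLinearMap.fst ℝ ℝ (ℝ × ℝ × ℝ)
  let pr2 : (ℝ × ℝ × ℝ × ℝ) →L[ℝ] ℝ := (ContinuousLinearMap.fst ℝ ℝ (ℝ × ℝ)).comp
    (ContinuousLinearMap.snd ℝ ℝ (ℝ × ℝ × ℝ))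
  let pr3 : (ℝ × ℝ × ℝ × ℝ) →L[ℝ] ℝ := (ContinuousLinearMap.fst ℝ ℝ ℝ).comp
    ((ContinuousLinearMap.snd ℝ ℝ (ℝ × ℝ)).comp (ContinuousLinearMap.snd ℝ ℝ (ℝ × ℝ × ℝ)))
  let Ψ : ℝ × ℝ × ℝ × ℝ → ℝ × ℝ × ℝ × ℝ := fun p => (pr1 p, pr2 p, pr3 p, F p)
  let D : (ℝ × ℝ × ℝ × ℝ) →L[ℝ] ℝ × ℝ × ℝ × ℝ := pr1.prod (pr2.prod (pr3.prod L))
  have hD : HasFDerivAt Ψ D 0 :=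
    pr1.hasFDerivAt.prodMk (pr2.hasFDerivAt.prodMk (pr3.hasFDerivAt.prodMk hL))
  have hA : AnalyticAt ℝ Ψ 0 :=
    (pr1.analyticAt _).prod ((pr2.analyticAt _).prod ((pr3.analyticAt _).prod hF))
  have hinj : Function.Injective D.toLinearMap := by
    rw [← LinearMap.ker_eq_bot, LinearMap.ker_eq_bot']
    rintro ⟨a, b, c, d⟩ h
    have h' : (a, b, c, L (a, b, c, d)) = (0, 0, 0, 0) := h
    simp only [Prod.mk.injEq] at h'
    obtain ⟨rfl, rfl, rfl, h4⟩ := h'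
    have : ((0:ℝ), (0:ℝ), (0:ℝ), d) = d • ((0:ℝ), (0:ℝ), (0:ℝ), (1:ℝ)) := by simp
    rw [this, map_smul, smul_eq_mul] at h4
    rcases mul_eq_zero.1 h4 with h5 | h5
    · simp [h5]
    · exact absurd h5 hne
  let De : (ℝ × ℝ × ℝ × ℝ) ≃L[ℝ] ℝ × ℝ × ℝ × ℝ :=
    (LinearEquiv.ofInjectiveEndo D.toLinearMap hinj).toContinuousLinearEquiv
  have hDe : HasFDerivAt Ψ (De : (ℝ × ℝ × ℝ × ℝ) →L[ℝ] ℝ × ℝ × ℝ × ℝ) 0 := by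
    have : (De : (ℝ × ℝ × ℝ × ℝ) →L[ℝ] ℝ × ℝ × ℝ × ℝ) = D := by
      apply ContinuousLinearMap.ext
      intro v
      rfl
    rw [this]
    exact hD
  have hC : ContDiffAt ℝ ⊤ Ψ 0 := hA.contDiffAt
  have hΨ0 : Ψ 0 = 0 := by
    simp [Ψ, h0]
  have hinv := (hC.to_localInverse hDe (by simp)).analyticAt
  have hleft := (hC.hasStrictFDerivAt' hDe (by simp)).eventually_left_inverse
  change ∀ᶠ x in 𝓝 0, hC.localInverse hDe (by simp) (Ψ x) = x at hleft
  generalize hC.localInverse hDe (by simp) = I at hinv hleft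
  rw [hΨ0] at hinv
  refine ⟨fun q => (I (q.1, q.2.1, q.2.2, 0)).2.2.2, ?_, ?_⟩
  · have e1 : AnalyticAt ℝ (fun q : ℝ × ℝ × ℝ => (q.1, q.2.1, q.2.2, (0:ℝ))) 0 :=
      analyticAt_fst.prod ((analyticAt_fst.comp analyticAt_snd).prod
        ((analyticAt_snd.comp analyticAt_snd).prod analyticAt_const))
    have e2 := hinv.comp_of_eq e1 rfl
    exact (analyticAt_snd.comp (analyticAt_snd.comp analyticAt_snd)).comp e2
  · filter_upwards [hleft] with p hp hFp
    have : Ψ p = (p.1, p.2.1, p.2.2.1, 0) := by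
      simp only [Ψ, hFp]; rfl
    rw [this] at hp
    simp only [hp]

noncomputable def ff (p : ℝ × ℝ) : ℝ × ℝ × ℝ × ℝ :=
  (p.1, p.1 * p.2, p.1 * Real.exp p.2, p.1 * JJ p)

lemma ff_analytic : AnalyticAt ℝ ff 0 := by
  have h1 : AnalyticAt ℝ (fun q : ℝ × ℝ => q.2) 0 := analyticAt_snd
  have h0 : AnalyticAt ℝ (fun q : ℝ × ℝ => q.1) 0 := analyticAt_fst
  have hJ : AnalyticAt ℝ JJ 0 := JJ_analytic 0 (by simp)
  exact h0.prod ((h0.mul h1).prod ((h0.mul h1.rexp).prod (h0.mul hJ)))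

lemma ff_zero : ff 0 = 0 := by simp [ff]

lemma L_ne (F : ℝ × ℝ × ℝ × ℝ → ℝ)
    (L : (ℝ × ℝ × ℝ × ℝ) →L[ℝ] ℝ) (hL : HasFDerivAt F L 0) (hne : L ≠ 0)
    (hz : ∀ᶠ p in 𝓝 (0 : ℝ × ℝ), F (ff p) = 0) : L (0, 0, 0, 1) ≠ 0 := by
  intro h4
  have step : ∀ᶠ y in 𝓝 (0:ℝ), L (1, y, Real.exp y, JJ (0, y)) = 0 := by
    have hz' : ∀ᶠ q in 𝓝 (0:ℝ) ×ˢ 𝓝 (0:ℝ), F (ff (q.2, q.1)) = 0 := by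
      rw [← nhds_prod_eq]
      exact (continuous_swap.tendsto' ((0:ℝ),(0:ℝ)) (0 : ℝ × ℝ) rfl).eventually hz
    filter_upwards [hz'.curry] with y hy
    have hJ : DifferentiableAt ℝ (fun x : ℝ => JJ (x, y)) 0 := by
      have : AnalyticAt ℝ JJ (0, y) := JJ_analytic (0, y) (by simp)
      have e : AnalyticAt ℝ (fun x : ℝ => (x, y)) 0 := by fun_prop
      exact (this.comp_of_eq e rfl).differentiableAt
    have hid := hasDerivAt_id (0:ℝ)
    have hd : HasDerivAt (fun x : ℝ => ff (x, y)) (1, y, Real.exp y, JJ (0, y)) 0 := by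
      refine hid.prodMk (HasDerivAt.prodMk ?_ (HasDerivAt.prodMk ?_ ?_))
      · simpa using hid.mul_const y
      · simpa using hid.mul_const (Real.exp y)
      · have := hid.fun_mul hJ.hasDerivAt
        simpa using this
    have e0 : ff (0, y) = 0 := by simp [ff]
    have hc : HasDerivAt (fun x : ℝ => F (ff (x, y))) (L (1, y, Real.exp y, JJ (0, y))) 0 :=
      HasFDerivAt.comp_hasDerivAt_of_eq (0:ℝ) hL hd e0.symm
    have hcz : HasDerivAt (fun x : ℝ => F (ff (x, y))) 0 0 :=
      (hasDerivAt_const (0:ℝ) (0:ℝ)).congr_of_eventuallyEq hy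
    exact hc.unique hcz
  have lin : ∀ a b c d : ℝ, L (a, b, c, d) = a * L (1, 0, 0, 0) + b * L (0, 1, 0, 0) + c * L (0, 0, 1, 0) := by
    intro a b c d
    have : ((a, b, c, d) : ℝ × ℝ × ℝ × ℝ) = a • (1, 0, 0, 0) + b • (0, 1, 0, 0) + c • (0, 0, 1, 0)
        + d • (0, 0, 0, 1) := by simp
    rw [this]
    simp only [map_add, map_smul, h4, smul_eq_mul, mul_zero, add_zero]
  obtain ⟨ε, hε, hb⟩ := Metric.eventually_nhds_iff.1 step
  have e1 := hb (y := ε / 2) (by rw [Real.dist_eq, sub_zero, abs_of_pos (by positivity)]; linarith)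
  have e2 := hb (y := -(ε / 2)) (by rw [Real.dist_eq, sub_zero, abs_neg, abs_of_pos (by positivity)]; linarith)
  have e3 := hb (y := 0) (by simpa using hε)
  rw [lin] at e1 e2 e3
  rw [Real.exp_zero] at e3
  have hcosh : 1 < Real.cosh (ε / 2) := Real.one_lt_cosh.2 (by positivity)
  rw [Real.cosh_eq] at hcosh
  have hγ : L (0, 0, 1, 0) = 0 := by
    have : (Real.exp (ε / 2) + Real.exp (-(ε / 2)) - 2) * L (0, 0, 1, 0) = 0 := by linarith
    rcases mul_eq_zero.1 this with h | h
    · linarith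
    · exact h
  have hα : L (1, 0, 0, 0) = 0 := by rw [hγ] at e3; linarith
  have hβ : L (0, 1, 0, 0) = 0 := by
    rw [hγ, hα] at e1
    have : ε / 2 * L (0, 1, 0, 0) = 0 := by linarith
    rcases mul_eq_zero.1 this with h | h
    · linarith
    · exact h
  apply hne
  apply ContinuousLinearMap.ext
  rintro ⟨a, b, c, d⟩
  rw [lin a b c d, hα, hβ, hγ]
  simp

/-- analytic continuation in the `y` direction -/
lemma contin (K : ℝ × ℝ × ℝ → ℝ) (r β x : ℝ) (hr : ∀ q ∈ Metric.ball (0 : ℝ × ℝ × ℝ) r, AnalyticAt ℝ K q)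
    (hβ0 : 0 < β) (hβr : β < r) (hβ1 : β ≤ 1 / 2) (hx0 : 0 < x) (hxr : x < r) (hx1 : x ≤ 1)
    (h : ∀ᶠ y in 𝓝 (0:ℝ), x * JJ (x, y) = K (x, x * y, x * Real.exp y)) :
    x * JJ (x, -β / x) = K (x, -β, x * Real.exp (-β / x)) := by
  have hneg : -β / x ≤ 0 := div_nonpos_of_nonpos_of_nonneg (by linarith) hx0.le
  have hxy : ∀ y ∈ Icc (-β / x) 0, -β ≤ x * y ∧ x * y ≤ 0 := by
    rintro y ⟨h1, h2⟩
    rw [div_le_iff₀ hx0] at h1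
    exact ⟨by linarith, mul_nonpos_of_nonneg_of_nonpos hx0.le h2⟩
  have A1 : AnalyticOnNhd ℝ (fun y => x * JJ (x, y)) (Icc (-β / x) 0) := by
    intro y hy
    obtain ⟨h1, h2⟩ := hxy y hy
    have hJ : AnalyticAt ℝ JJ (x, y) := by
      apply JJ_analytic
      rintro u ⟨hu0, hu1⟩
      have : x ^ 2 * y * u = (x * u) * (x * y) := by ring
      simp only [this]
      have : 0 ≤ x * u := by positivity
      have : x * u ≤ 1 := mul_le_one₀ hx1 hu0 hu1
      nlinarith
    have e : AnalyticAt ℝ (fun y : ℝ => (x, y)) y := analyticAt_const.prod analyticAt_id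
    exact analyticAt_const.mul (hJ.comp_of_eq e rfl)
  have A2 : AnalyticOnNhd ℝ (fun y => K (x, x * y, x * Real.exp y)) (Icc (-β / x) 0) := by
    intro y hy
    obtain ⟨h1, h2⟩ := hxy y hy
    have e : AnalyticAt ℝ (fun y : ℝ => (x, x * y, x * Real.exp y)) y :=
      analyticAt_const.prod ((analyticAt_const.mul analyticAt_id).prod
        (analyticAt_const.mul analyticAt_id.rexp))
    refine (hr (x, x * y, x * Real.exp y) ?_).comp_of_eq e rfl
    rw [mem_ball_zero_iff]
    have he : Real.exp y ≤ 1 := Real.exp_le_one_iff.2 hy.2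
    simp only [Prod.norm_def, sup_lt_iff, Real.norm_eq_abs]
    refine ⟨?_, ?_, ?_⟩
    · rwa [abs_of_pos hx0]
    · rw [abs_lt]; constructor <;> linarith
    · rw [abs_of_pos (by positivity)]
      nlinarith
  have := A1.eqOn_of_preconnected_of_eventuallyEq A2 isPreconnected_Icc
    (right_mem_Icc.2 hneg) h (left_mem_Icc.2 hneg)
  simp only at this
  rw [this, mul_div_cancel₀ _ hx0.ne']

noncomputable def rr (β w : ℝ) : ℝ := (-(w * β) + √((w * β) ^ 2 + 4)) / 2

lemma rr_pos (β w : ℝ) : 0 < rr β w := by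
  have : |w * β| < √((w * β) ^ 2 + 4) := by
    rw [← Real.sqrt_sq_eq_abs]
    exact Real.sqrt_lt_sqrt (sq_nonneg _) (by linarith)
  have := (abs_lt.1 this).2
  unfold rr
  linarith

lemma rr_sq (β w : ℝ) : rr β w ^ 2 = 1 - (w * rr β w) * β := by
  have := Real.sq_sqrt (show 0 ≤ (w * β) ^ 2 + 4 by positivity)
  unfold rr
  linear_combination this / 4

lemma rr_analytic (β : ℝ) : AnalyticAt ℝ (rr β) 0 := by
  have h1 : AnalyticAt ℝ (fun w : ℝ => w * β) 0 := analyticAt_id.mul analyticAt_const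
  have h2 : AnalyticAt ℝ (fun w : ℝ => √((w * β) ^ 2 + 4)) 0 := by
    have := (Real.contDiffAt_sqrt (n := ⊤) (x := 4) (by norm_num)).analyticAt
    exact this.comp_of_eq ((h1.pow 2).add analyticAt_const) (by simp)
  exact (h1.neg.add h2).div analyticAt_const (by norm_num)

lemma rr_zero (β : ℝ) : rr β 0 = 1 := by
  have : (4:ℝ) = 2 ^ 2 := by norm_num
  simp [rr, this]

lemma no_rel (F : ℝ × ℝ × ℝ × ℝ → ℝ) (hF : AnalyticAt ℝ F 0) (h0 : F 0 = 0)
    (L : (ℝ × ℝ × ℝ × ℝ) →L[ℝ] ℝ) (hL : HasFDerivAt F L 0) (hne : L ≠ 0)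
    (hz : ∀ᶠ p in 𝓝 (0 : ℝ × ℝ), F (ff p) = 0) : False := by
  obtain ⟨K, hK, hKF⟩ := ift F hF h0 L hL (L_ne F L hL hne hz)
  have hK2 : ∀ᶠ p in 𝓝 (0 : ℝ × ℝ), p.1 * JJ p = K (p.1, p.1 * p.2, p.1 * Real.exp p.2) := by
    have hc : Tendsto ff (𝓝 0) (𝓝 0) := by
      have := ff_analytic.continuousAt.tendsto
      rwa [ff_zero] at this
    filter_upwards [hz, hc.eventually hKF] with p h1 h2
    exact h2 h1
  obtain ⟨r, hr0, hr⟩ := Metric.eventually_nhds_iff_ball.1 hK.eventually_analyticAt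
  have hcur : ∀ᶠ x in 𝓝 (0:ℝ), ∀ᶠ y in 𝓝 (0:ℝ), x * JJ (x, y) = K (x, x * y, x * Real.exp y) := by
    have hK2' : ∀ᶠ p in 𝓝 (0:ℝ) ×ˢ 𝓝 (0:ℝ), p.1 * JJ p = K (p.1, p.1 * p.2, p.1 * Real.exp p.2) := by
      rw [← nhds_prod_eq]; exact hK2
    exact hK2'.curry
  set β : ℝ := min r 1 / 2 with hβ
  have hm : 0 < min r 1 := lt_min hr0 one_pos
  have hβ0 : 0 < β := by positivity
  have hβr : β < r := by have := min_le_left r 1; linarith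
  have hβ1 : β ≤ 1 / 2 := by have := min_le_right r 1; linarith
  have hKb : AnalyticAt ℝ K (0, -β, 0) := by
    apply hr
    rw [mem_ball_zero_iff]
    simp [Prod.norm_def, abs_of_pos hβ0, hβr, hr0]
  obtain ⟨C, s, hs, hlip⟩ := (hKb.contDiffAt (n := 1)).exists_lipschitzOnWith
  have hρc : Tendsto (rr β) (𝓝[>] 0) (𝓝 1) := by
    have := (rr_analytic β).continuousAt.tendsto
    rw [rr_zero] at this
    exact this.mono_left nhdsWithin_le_nhds
  have hwc : Tendsto (fun w : ℝ => w) (𝓝[>] 0) (𝓝 0) := tendsto_id.mono_left nhdsWithin_le_nhds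
  have hxc : Tendsto (fun w => w * rr β w) (𝓝[>] 0) (𝓝 0) := by
    simpa using hwc.mul hρc
  have M_an : AnalyticAt ℝ (fun w => -(rr β w * K (w * rr β w, -β, 0))) 0 := by
    have e : AnalyticAt ℝ (fun w : ℝ => (w * rr β w, -β, (0:ℝ))) 0 :=
      (analyticAt_id.mul (rr_analytic β)).prod (analyticAt_const.prod analyticAt_const)
    exact ((rr_analytic β).mul (hKb.comp_of_eq e (by simp))).neg
  refine EE_not_analytic _ M_an (β / 2) (by positivity) ?_
  refine Asymptotics.IsBigO.of_bound (2 * (C + 1)) ?_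
  have hs1 : ∀ᶠ w in 𝓝[>] (0:ℝ), (w * rr β w, -β, (0:ℝ)) ∈ s := by
    have : Tendsto (fun w => (w * rr β w, -β, (0:ℝ))) (𝓝[>] 0) (𝓝 (0, -β, 0)) :=
      hxc.prodMk_nhds (tendsto_const_nhds.prodMk_nhds tendsto_const_nhds)
    exact this.eventually hs
  have hs2 : ∀ᶠ w in 𝓝[>] (0:ℝ), (w * rr β w, -β, (w * rr β w) * Real.exp (-β / (w * rr β w))) ∈ s := by
    have hz : Tendsto (fun w => (w * rr β w) * Real.exp (-β / (w * rr β w))) (𝓝[>] 0) (𝓝 0) := by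
      refine squeeze_zero_norm' ?_ hxc
      filter_upwards [self_mem_nhdsWithin] with w hw
      have hw0 : (0:ℝ) < w := hw
      have hx0 : 0 < w * rr β w := mul_pos hw0 (rr_pos β w)
      rw [Real.norm_of_nonneg (by positivity)]
      refine mul_le_of_le_one_right hx0.le (Real.exp_le_one_iff.2 ?_)
      exact div_nonpos_of_nonpos_of_nonneg (by linarith) hx0.le
    have : Tendsto (fun w => (w * rr β w, -β, (w * rr β w) * Real.exp (-β / (w * rr β w)))) (𝓝[>] 0) (𝓝 (0, -β, 0)) :=
      hxc.prodMk_nhds (tendsto_const_nhds.prodMk_nhds hz)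
    exact this.eventually hs
  filter_upwards [self_mem_nhdsWithin, hs1, hs2, hxc.eventually hcur,
    hxc.eventually (gt_mem_nhds hr0), hxc.eventually (gt_mem_nhds one_pos),
    hρc.eventually (gt_mem_nhds (show (1:ℝ) < 2 by norm_num))] with w hw h1 h2 h3 h4 h5 h6
  have hw0 : (0:ℝ) < w := hw
  have hρ0 := rr_pos β w
  have hsq := rr_sq β w
  set ρ := rr β w with hρ
  have hx0 : 0 < w * ρ := mul_pos hw0 hρ0
  have hcon := contin K r β (w * ρ) hr hβ0 hβr hβ1 hx0 h4 h5.le h3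
  rw [JJ_eq (w * ρ) (-β / (w * ρ)) w ρ hρ0.ne' (by rw [hsq]; field_simp; ring) rfl] at hcon
  have hl := hlip.dist_le_mul _ h2 _ h1
  have hexp : Real.exp (-β / (w * ρ)) ≤ Real.exp (-(β / 2) / w) := by
    apply Real.exp_le_exp.2
    rw [neg_div, neg_div, neg_le_neg_iff, div_div]
    exact div_le_div_of_nonneg_left hβ0.le hx0 (by nlinarith)
  set x := w * ρ with hx
  set e := Real.exp (-β / x) with he
  have he0 : 0 < e := Real.exp_pos _
  rw [Real.dist_eq] at hl
  have hd : dist (x, -β, x * e) (x, -β, (0:ℝ)) = x * e := by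
    simp [Prod.dist_eq, Real.dist_eq, abs_of_pos he0, abs_of_pos hx0]
    positivity
  rw [hd] at hl
  have hid : -(ρ * K (x, -β, 0)) - w * EE w = ρ * (K (x, -β, x * e) - K (x, -β, 0)) - ρ * (x * e * EE x) := by
    rw [← hcon, hx]
    field_simp
    ring
  rw [hid, Real.norm_of_nonneg (Real.exp_pos _).le, Real.norm_eq_abs]
  have hE := EE_bound x
  calc |ρ * (K (x, -β, x * e) - K (x, -β, 0)) - ρ * (x * e * EE x)|
      ≤ |ρ * (K (x, -β, x * e) - K (x, -β, 0))| + |ρ * (x * e * EE x)| := abs_sub _ _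
    _ = ρ * |K (x, -β, x * e) - K (x, -β, 0)| + ρ * (x * e * |EE x|) := by
        rw [abs_mul, abs_mul, abs_mul, abs_of_pos hρ0, abs_of_pos (mul_pos hx0 he0)]
    _ ≤ ρ * (C * (x * e)) + ρ * (x * e * 1) := by gcongr
    _ = ρ * ((C + 1) * (x * e)) := by ring
    _ ≤ 2 * ((C + 1) * (1 * e)) := by gcongr
    _ = 2 * (C + 1) * e := by ring
    _ ≤ 2 * (C + 1) * Real.exp (-(β / 2) / w) := by gcongr

noncomputable def HH (q : ℝ × ℝ × ℝ × ℝ) : ℝ :=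
  q.2.2.1 * EE q.1 - q.1 * (EE (q.1 / √(1 + q.1 * q.2.1)) / (1 + q.1 * q.2.1))

lemma HH_smooth : ContDiffAt ℝ (⊤ : ℕ∞) HH 0 := by
  have p1 : ContDiffAt ℝ (⊤ : ℕ∞) (fun q : ℝ × ℝ × ℝ × ℝ => q.1) 0 := contDiffAt_fst
  have p2 : ContDiffAt ℝ (⊤ : ℕ∞) (fun q : ℝ × ℝ × ℝ × ℝ => q.2.1) 0 := by fun_prop
  have p3 : ContDiffAt ℝ (⊤ : ℕ∞) (fun q : ℝ × ℝ × ℝ × ℝ => q.2.2.1) 0 := by fun_prop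
  have s1 : ContDiffAt ℝ (⊤ : ℕ∞) (fun q : ℝ × ℝ × ℝ × ℝ => 1 + q.1 * q.2.1) 0 :=
    contDiffAt_const.add (p1.mul p2)
  have s2 : ContDiffAt ℝ (⊤ : ℕ∞) (fun q : ℝ × ℝ × ℝ × ℝ => √(1 + q.1 * q.2.1)) 0 :=
    s1.sqrt (by simp)
  have s3 := EE_smooth.contDiffAt.comp (0 : ℝ × ℝ × ℝ × ℝ) (p1.div s2 (by simp))
  exact (p3.mul (EE_smooth.contDiffAt.comp (0 : ℝ × ℝ × ℝ × ℝ) p1)).sub (p1.mul (s3.div s1 (by simp)))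

/-- There exist two real analytic map germs `f, g : (ℝ²,0) → (ℝ⁴,0)` which are `C^∞` R-L
equivalent but not analytically R-L equivalent. -/
theorem exists_smooth_RL_equiv_not_analytic_RL_equiv :
    ∃ f g : ℝ × ℝ → ℝ × ℝ × ℝ × ℝ,
      AnalyticAt ℝ f 0 ∧ f 0 = 0 ∧ AnalyticAt ℝ g 0 ∧ g 0 = 0 ∧
      (∃ (τ : ℝ × ℝ → ℝ × ℝ) (π : ℝ × ℝ × ℝ × ℝ → ℝ × ℝ × ℝ × ℝ),
        ContDiffAt ℝ (⊤ : ℕ∞) τ 0 ∧ τ 0 = 0 ∧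
        (∃ Dτ : (ℝ × ℝ) ≃L[ℝ] ℝ × ℝ,
          HasFDerivAt τ (Dτ : (ℝ × ℝ) →L[ℝ] ℝ × ℝ) 0) ∧
        ContDiffAt ℝ (⊤ : ℕ∞) π 0 ∧ π 0 = 0 ∧
        (∃ Dπ : (ℝ × ℝ × ℝ × ℝ) ≃L[ℝ] ℝ × ℝ × ℝ × ℝ,
          HasFDerivAt π (Dπ : (ℝ × ℝ × ℝ × ℝ) →L[ℝ] ℝ × ℝ × ℝ × ℝ) 0) ∧
        ∀ᶠ x : ℝ × ℝ in 𝓝 0, g (τ x) = π (f x)) ∧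
      ¬ (∃ (τ : ℝ × ℝ → ℝ × ℝ) (π : ℝ × ℝ × ℝ × ℝ → ℝ × ℝ × ℝ × ℝ),
        AnalyticAt ℝ τ 0 ∧ τ 0 = 0 ∧
        (∃ Dτ : (ℝ × ℝ) ≃L[ℝ] ℝ × ℝ,
          HasFDerivAt τ (Dτ : (ℝ × ℝ) →L[ℝ] ℝ × ℝ) 0) ∧
        AnalyticAt ℝ π 0 ∧ π 0 = 0 ∧
        (∃ Dπ : (ℝ × ℝ × ℝ × ℝ) ≃L[ℝ] ℝ × ℝ × ℝ × ℝ,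
          HasFDerivAt π (Dπ : (ℝ × ℝ × ℝ × ℝ) →L[ℝ] ℝ × ℝ × ℝ × ℝ) 0) ∧
        ∀ᶠ x : ℝ × ℝ in 𝓝 0, g (τ x) = π (f x)) := by
  refine ⟨ff, fun p => (p.1, p.1 * p.2, p.1 * Real.exp p.2, 0), ff_analytic, ff_zero, ?_, by simp, ?_, ?_⟩
  · have h1 : AnalyticAt ℝ (fun q : ℝ × ℝ => q.2) 0 := analyticAt_snd
    have h0 : AnalyticAt ℝ (fun q : ℝ × ℝ => q.1) 0 := analyticAt_fst
    exact h0.prod ((h0.mul h1).prod ((h0.mul h1.rexp).prod analyticAt_const))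
  · let π : ℝ × ℝ × ℝ × ℝ → ℝ × ℝ × ℝ × ℝ := fun q => (q.1, q.2.1, q.2.2.1, q.2.2.2 - HH q)
    have hπ : ContDiffAt ℝ (⊤ : ℕ∞) π 0 := by
      have p1 : ContDiffAt ℝ (⊤ : ℕ∞) (fun q : ℝ × ℝ × ℝ × ℝ => q.1) 0 := contDiffAt_fst
      have p2 : ContDiffAt ℝ (⊤ : ℕ∞) (fun q : ℝ × ℝ × ℝ × ℝ => q.2.1) 0 := by fun_prop
      have p3 : ContDiffAt ℝ (⊤ : ℕ∞) (fun q : ℝ × ℝ × ℝ × ℝ => q.2.2.1) 0 := by fun_prop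
      have p4 : ContDiffAt ℝ (⊤ : ℕ∞) (fun q : ℝ × ℝ × ℝ × ℝ => q.2.2.2) 0 := by fun_prop
      exact p1.prodMk (p2.prodMk (p3.prodMk (p4.sub HH_smooth)))
    refine ⟨id, π, contDiffAt_id, rfl, ⟨ContinuousLinearEquiv.refl ℝ _, hasFDerivAt_id _⟩, hπ,
      by simp [π, HH], ?_, ?_⟩
    · have hHd : HasFDerivAt HH (fderiv ℝ HH 0) 0 :=
        (HH_smooth.differentiableAt (by simp)).hasFDerivAt
      set l := fderiv ℝ HH 0 with hl
      let pr1 : (ℝ × ℝ × ℝ × ℝ) →L[ℝ] ℝ := ContinuousLinearMap.fst ℝ ℝ (ℝ × ℝ × ℝ)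
      let pr2 : (ℝ × ℝ × ℝ × ℝ) →L[ℝ] ℝ := (ContinuousLinearMap.fst ℝ ℝ (ℝ × ℝ)).comp
        (ContinuousLinearMap.snd ℝ ℝ (ℝ × ℝ × ℝ))
      let pr3 : (ℝ × ℝ × ℝ × ℝ) →L[ℝ] ℝ := (ContinuousLinearMap.fst ℝ ℝ ℝ).comp
        ((ContinuousLinearMap.snd ℝ ℝ (ℝ × ℝ)).comp (ContinuousLinearMap.snd ℝ ℝ (ℝ × ℝ × ℝ)))
      let pr4 : (ℝ × ℝ × ℝ × ℝ) →L[ℝ] ℝ := (ContinuousLinearMap.snd ℝ ℝ ℝ).comp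
        ((ContinuousLinearMap.snd ℝ ℝ (ℝ × ℝ)).comp (ContinuousLinearMap.snd ℝ ℝ (ℝ × ℝ × ℝ)))
      let D : (ℝ × ℝ × ℝ × ℝ) →L[ℝ] ℝ × ℝ × ℝ × ℝ := pr1.prod (pr2.prod (pr3.prod (pr4 - l)))
      have hD : HasFDerivAt π D 0 :=
        pr1.hasFDerivAt.prodMk (pr2.hasFDerivAt.prodMk (pr3.hasFDerivAt.prodMk
          (pr4.hasFDerivAt.sub hHd)))
      have hl4 : ∀ d : ℝ, l (0, 0, 0, d) = 0 := by
        intro d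
        have hd : HasDerivAt (fun t : ℝ => ((0:ℝ), (0:ℝ), (0:ℝ), t * d)) (0, 0, 0, d) 0 := by
          refine (hasDerivAt_const _ _).prodMk ((hasDerivAt_const _ _).prodMk
            ((hasDerivAt_const _ _).prodMk ?_))
          simpa using (hasDerivAt_id (0:ℝ)).mul_const d
        have hc := HasFDerivAt.comp_hasDerivAt_of_eq (0:ℝ) hHd hd (by simp; rfl)
        have hcz : HasDerivAt (HH ∘ fun t : ℝ => ((0:ℝ), (0:ℝ), (0:ℝ), t * d)) 0 0 := by
          have : (HH ∘ fun t : ℝ => ((0:ℝ), (0:ℝ), (0:ℝ), t * d)) = fun _ => 0 := by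
            funext t; simp [HH]
          rw [this]
          exact hasDerivAt_const _ _
        exact hc.unique hcz
      have hinj : Function.Injective D.toLinearMap := by
        rw [← LinearMap.ker_eq_bot, LinearMap.ker_eq_bot']
        rintro ⟨a, b, c, d⟩ h
        have h' : (a, b, c, d - l (a, b, c, d)) = (0, 0, 0, 0) := h
        simp only [Prod.mk.injEq] at h'
        obtain ⟨rfl, rfl, rfl, h4⟩ := h'
        rw [hl4, sub_zero] at h4
        simp [h4]
      refine ⟨(LinearEquiv.ofInjectiveEndo D.toLinearMap hinj).toContinuousLinearEquiv, ?_⟩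
      have : (((LinearEquiv.ofInjectiveEndo D.toLinearMap hinj).toContinuousLinearEquiv :
          (ℝ × ℝ × ℝ × ℝ) ≃L[ℝ] ℝ × ℝ × ℝ × ℝ) : (ℝ × ℝ × ℝ × ℝ) →L[ℝ] ℝ × ℝ × ℝ × ℝ) = D := by
        apply ContinuousLinearMap.ext
        intro v
        rfl
      rw [this]
      exact hD
    · have hpos : ∀ᶠ p : ℝ × ℝ in 𝓝 0, 0 < 1 + p.1 ^ 2 * p.2 := by
        have : ContinuousAt (fun p : ℝ × ℝ => 1 + p.1 ^ 2 * p.2) 0 := by fun_prop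
        exact this.eventually (lt_mem_nhds (by simp))
      filter_upwards [hpos] with p hp
      obtain ⟨x, y⟩ := p
      simp only at hp
      have hs : 0 < √(1 + x ^ 2 * y) := Real.sqrt_pos.2 hp
      have hJ := JJ_eq x y (x / √(1 + x ^ 2 * y)) (√(1 + x ^ 2 * y)) hs.ne'
        (Real.sq_sqrt hp.le).symm (div_mul_cancel₀ _ hs.ne').symm
      rw [Real.sq_sqrt hp.le] at hJ
      have hxx : x * (x * y) = x ^ 2 * y := by ring
      simp only [π, ff, HH, id, hJ, hxx, Prod.mk.injEq, true_and]
      ring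
  · rintro ⟨τ, π, -, -, -, hπ, hπ0, ⟨D, hD⟩, hev⟩
    let pr4 : (ℝ × ℝ × ℝ × ℝ) →L[ℝ] ℝ := (ContinuousLinearMap.snd ℝ ℝ ℝ).comp
      ((ContinuousLinearMap.snd ℝ ℝ (ℝ × ℝ)).comp (ContinuousLinearMap.snd ℝ ℝ (ℝ × ℝ × ℝ)))
    refine no_rel (fun q => pr4 (π q)) ((pr4.analyticAt _).comp hπ) (by simp [hπ0])
      (pr4.comp (D : (ℝ × ℝ × ℝ × ℝ) →L[ℝ] ℝ × ℝ × ℝ × ℝ)) (pr4.hasFDerivAt.comp 0 hD) ?_ ?_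
    · intro h
      have := congrArg (fun T : (ℝ × ℝ × ℝ × ℝ) →L[ℝ] ℝ => T (D.symm (0, 0, 0, 1))) h
      simp [pr4] at this
    · filter_upwards [hev] with p hp
      rw [← hp]
      rfl
end
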